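/- Let p_{Y|X} and p_{Z|X} be channels on finite alphabets 𝒳, 𝒴, 𝒵, and let r, α, κ be positive real numbers. Suppose there exist finitely supported random variables W, U, X such that (U,W) → X → (Y,Z) is a Markov chain, where conditionally on X the outputs satisfy Y ∼ p_{Y|X}(·|X) and Z ∼ p_{Z|X}(·|X), and such that r + α ≤ I(Y;U,W), α ≤ I(Y;U|W) − I(Z;U|W), and α − κ ≤ 0. Then (r, α, κ) ∈ C_TA(p_{Y|X}, p_{Z|X}). -/

import Mathlib

open scoped BigOperators Classical

noncomputable section

/-- A stochastic map (conditional probability distribution): for each `b`,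
`p b ∈ P(A)` is a probability mass function on `A`. -/
def IsStochastic {B A : Type*} [Fintype A] (p : B → A → ℝ) : Prop :=
  (∀ b a, 0 ≤ p b a) ∧ ∀ b, ∑ a, p b a = 1

/-- The blocklength-`n` memoryless extension of a channel, acting componentwise. -/
def memExt {X Y : Type*} (W : X → Y → ℝ) (n : ℕ) : (Fin n → X) → (Fin n → Y) → ℝ :=
  fun x y => ∏ i, W (x i) (y i)

/-- Shannon entropy (base 2) of a finitely supported pmf. -/
def ent {A : Type*} [Fintype A] (p : A → ℝ) : ℝ := -∑ a, p a * Real.logb 2 (p a)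

variable {𝒳 𝒴 𝒵 : Type} [Fintype 𝒳] [Fintype 𝒴] [Fintype 𝒵]

/-- The joint pmf of (channel output, message, key) induced by a code:
the message `M` and the key `K` are independent and uniform, `Xⁿ ∼ f(·|M,K)`,
and the output is obtained through the memoryless extension of the channel `Ch`. -/
def pOut {M K 𝒪 : Type*} [Fintype M] [Fintype K] [Fintype 𝒳]
    (Ch : 𝒳 → 𝒪 → ℝ) (n : ℕ) (f : M × K → (Fin n → 𝒳) → ℝ) :
    (Fin n → 𝒪) → M → K → ℝ :=
  fun o m k => ∑ x, ((Fintype.card M : ℝ))⁻¹ * ((Fintype.card K : ℝ))⁻¹ *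
    f (m, k) x * memExt Ch n x o

/-- `(f, φ)` is an `(r, α, κ, δ, n)`-TA (typical authentication) code for the
DM-AIC`(Wc, Vc)`: the message rate `n⁻¹ log₂ |M|` is at least `r`, the key
consumption rate `n⁻¹ log₂ |K|` is at most `κ`, the probability of message error
is at most `δ`, and for every attack channel `ψ`, the probability (under the joint
law of `(Zⁿ, M, K)`) that `−n⁻¹ log₂ ω_{f,φ}(Zⁿ,M,K) < α`, i.e. that
`ω_{f,φ}(Zⁿ,M,K) > 2^{−nα}`, is at most `δ`. -/
def IsTACode {M K : Type*} [Fintype M] [Fintype K]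
    (Wc : 𝒳 → 𝒴 → ℝ) (Vc : 𝒳 → 𝒵 → ℝ) (r α κ δ : ℝ) (n : ℕ)
    (f : M × K → (Fin n → 𝒳) → ℝ)
    (φ : (Fin n → 𝒴) × K → Option M → ℝ) : Prop :=
  IsStochastic f ∧ IsStochastic φ ∧
  r ≤ Real.logb 2 (Fintype.card M) / n ∧
  Real.logb 2 (Fintype.card K) / n ≤ κ ∧
  1 - (∑ y, ∑ m, ∑ k, pOut Wc n f y m k * φ (y, k) (some m)) ≤ δ ∧
  ∀ ψ : (Fin n → 𝒵) → (Fin n → 𝒴) → ℝ, IsStochastic ψ →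
    (∑ z, ∑ m, ∑ k,
      (if (2 : ℝ) ^ (-(n : ℝ) * α) <
          ∑ y, ψ z y * ∑ m' ∈ Finset.univ.erase m, φ (y, k) (some m')
        then pOut Vc n f z m k else 0)) ≤ δ

/-- The typical authentication capacity region `C_TA(Wc, Vc)`: the set of triples
`(r, α, κ)` with `r > 0` such that for each blocklength `i ∈ ℤ⁺` there is an
`(rᵢ, αᵢ, κᵢ, δᵢ, i)`-TA code with `(rᵢ, αᵢ, κᵢ, δᵢ) → (r, α, κ, 0)`. -/
def CTA (Wc : 𝒳 → 𝒴 → ℝ) (Vc : 𝒳 → 𝒵 → ℝ) : Set (ℝ × ℝ × ℝ) :=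
  { t | 0 < t.1 ∧ ∃ rs αs κs ds : ℕ → ℝ,
      (∀ i : ℕ, 0 < i → ∃ (Mc Kc : ℕ) (f : Fin Mc × Fin Kc → (Fin i → 𝒳) → ℝ)
          (φ : (Fin i → 𝒴) × Fin Kc → Option (Fin Mc) → ℝ),
          IsTACode Wc Vc (rs i) (αs i) (κs i) (ds i) i f φ) ∧
      Filter.Tendsto (fun i => (rs i, αs i, κs i, ds i)) Filter.atTop
        (nhds (t.1, t.2.1, t.2.2, 0)) }

section MutualInformation

variable {𝒲 𝒰 𝒳' 𝒪 : Type*} [Fintype 𝒲] [Fintype 𝒰] [Fintype 𝒳'] [Fintype 𝒪]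

/-- For the joint law `p(w,u,x,o) = q(w,u,x)·Ch(o|x)` (so that `(U,W) → X → O` is a
Markov chain and `O` is the output of the channel `Ch` on input `X`):
the mutual information `I(O; U, W)`, computed as `H(O) + H(U,W) − H(O,U,W)`. -/
def miO_UW (q : 𝒲 × 𝒰 × 𝒳' → ℝ) (Ch : 𝒳' → 𝒪 → ℝ) : ℝ :=
  ent (fun o : 𝒪 => ∑ w, ∑ u, ∑ x, q (w, u, x) * Ch x o)
  + ent (fun p : 𝒰 × 𝒲 => ∑ x, q (p.2, p.1, x))
  - ent (fun p : 𝒪 × 𝒰 × 𝒲 => ∑ x, q (p.2.2, p.2.1, x) * Ch x p.1)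

/-- The conditional mutual information `I(O; U | W)`, computed as
`H(O,W) + H(U,W) − H(O,U,W) − H(W)`. -/
def miO_U_W (q : 𝒲 × 𝒰 × 𝒳' → ℝ) (Ch : 𝒳' → 𝒪 → ℝ) : ℝ :=
  ent (fun p : 𝒪 × 𝒲 => ∑ u, ∑ x, q (p.2, u, x) * Ch x p.1)
  + ent (fun p : 𝒰 × 𝒲 => ∑ x, q (p.2, p.1, x))
  - ent (fun p : 𝒪 × 𝒰 × 𝒲 => ∑ x, q (p.2.2, p.2.1, x) * Ch x p.1)
  - ent (fun w : 𝒲 => ∑ u, ∑ x, q (w, u, x))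

/-- The mutual information `I(O; W)`, computed as `H(O) + H(W) − H(O,W)`. -/
def miO_W (q : 𝒲 × 𝒰 × 𝒳' → ℝ) (Ch : 𝒳' → 𝒪 → ℝ) : ℝ :=
  ent (fun o : 𝒪 => ∑ w, ∑ u, ∑ x, q (w, u, x) * Ch x o)
  + ent (fun w : 𝒲 => ∑ u, ∑ x, q (w, u, x))
  - ent (fun p : 𝒪 × 𝒲 => ∑ u, ∑ x, q (p.2, u, x) * Ch x p.1)

end MutualInformation

/-! ### Finite product expectations -/

lemma aux_sum_prod {ι A : Type*} [Fintype ι] [DecidableEq ι] [Fintype A] (g : ι → A → ℝ) :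
    ∑ c : ι → A, ∏ j, g j (c j) = ∏ j, ∑ a, g j a := by
  rw [Finset.prod_univ_sum, Fintype.piFinset_univ]

lemma aux_pi_sum {ι A : Type*} [Fintype ι] [Fintype A] (μ : A → ℝ) (h1 : ∑ a, μ a = 1) :
    ∑ c : ι → A, ∏ j, μ (c j) = 1 := by
  rw [aux_sum_prod (fun _ => μ)]; simp [h1]

lemma aux_pi_one {ι A : Type*} [Fintype ι] [Fintype A] (μ : A → ℝ) (h1 : ∑ a, μ a = 1)
    (F : A → ℝ) (i : ι) :
    ∑ c : ι → A, (∏ j, μ (c j)) * F (c i) = ∑ a, μ a * F a := by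
  have h : ∀ c : ι → A, (∏ j, μ (c j)) * F (c i)
      = ∏ j, (μ (c j) * (if j = i then F (c j) else 1)) := by
    intro c
    rw [Finset.prod_mul_distrib]
    simp
  simp_rw [h]
  rw [aux_sum_prod (fun j a => μ a * (if j = i then F a else 1))]
  rw [Finset.prod_eq_single i]
  · simp
  · intro b _ hb
    simp [hb, h1]
  · simp

lemma aux_pi_two' {ι A : Type*} [Fintype ι] [Fintype A] (μ : A → ℝ) (h1 : ∑ a, μ a = 1)
    (F G : A → ℝ) (i i' : ι) (hi : i ≠ i') :
    ∑ c : ι → A, (∏ j, μ (c j)) * (F (c i) * G (c i'))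
      = (∑ a, μ a * F a) * ∑ a, μ a * G a := by
  have h : ∀ c : ι → A, (∏ j, μ (c j)) * (F (c i) * G (c i'))
      = ∏ j, (μ (c j) * ((if j = i then F (c j) else 1) * (if j = i' then G (c j) else 1))) := by
    intro c
    rw [Finset.prod_mul_distrib, Finset.prod_mul_distrib]
    simp
  simp_rw [h]
  rw [aux_sum_prod (fun j a => μ a * ((if j = i then F a else 1) * (if j = i' then G a else 1)))]
  rw [Finset.prod_eq_mul i i' hi]
  · simp [hi, hi.symm]
  · intro b _ hb
    simp [hb.1, hb.2, h1]
  · simp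
  · simp

lemma aux_pi_two {ι A : Type*} [Fintype ι] [Fintype A] (μ : A → ℝ) (h1 : ∑ a, μ a = 1)
    (F : A → A → ℝ) (i i' : ι) (hi : i ≠ i') :
    ∑ c : ι → A, (∏ j, μ (c j)) * F (c i) (c i')
      = ∑ a, μ a * ∑ b, μ b * F a b := by
  have h : ∀ c : ι → A, (∏ j, μ (c j)) * F (c i) (c i')
      = ∑ a, (∏ j, μ (c j)) * ((if c i = a then (1:ℝ) else 0) * F a (c i')) := by
    intro c
    rw [← Finset.mul_sum]
    simp
  simp_rw [h]
  rw [Finset.sum_comm]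
  refine Finset.sum_congr rfl fun a _ => ?_
  rw [aux_pi_two' μ h1 (fun x => if x = a then (1:ℝ) else 0) (F a) i i' hi]
  simp

lemma aux_exists_le {A : Type*} [Fintype A] (μ : A → ℝ) (h0 : ∀ a, 0 ≤ μ a) (h1 : ∑ a, μ a = 1)
    (F : A → ℝ) (B : ℝ) (h : ∑ a, μ a * F a ≤ B) : ∃ a, F a ≤ B := by
  by_contra! hc
  have h2 : ∑ a, μ a * F a > ∑ a, μ a * B := by
    have hex : ∃ a, 0 < μ a := by
      by_contra! hh
      have : ∑ a, μ a ≤ 0 := Finset.sum_nonpos fun a _ => hh a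
      linarith
    obtain ⟨a0, ha0⟩ := hex
    refine Finset.sum_lt_sum (fun a _ => mul_le_mul_of_nonneg_left (hc a).le (h0 a))
      ⟨a0, Finset.mem_univ _, mul_lt_mul_of_pos_left (hc a0) ha0⟩
  rw [← Finset.sum_mul, h1] at h2
  linarith

/-- variance of an i.i.d. sum over an injective family of coordinates -/
lemma aux_variance {ι κ A : Type*} [Fintype ι] [Fintype κ] [Fintype A] (μ : A → ℝ)
    (h0 : ∀ a, 0 ≤ μ a) (h1 : ∑ a, μ a = 1)
    (G : A → ℝ) (e : κ → ι) (he : Function.Injective e) :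
    ∑ c : ι → A, (∏ j, μ (c j)) * (∑ l, (G (c (e l)) - ∑ a, μ a * G a)) ^ 2
      ≤ Fintype.card κ * ∑ a, μ a * G a ^ 2 := by
  set g := ∑ a, μ a * G a with hg
  have hz : ∑ a, μ a * (G a - g) = 0 := by
    simp_rw [mul_sub, Finset.sum_sub_distrib, ← Finset.sum_mul, h1]
    rw [← hg]; ring
  have hexp : ∀ c : ι → A, (∏ j, μ (c j)) * (∑ l, (G (c (e l)) - g)) ^ 2
      = ∑ l, ∑ l', (∏ j, μ (c j)) * ((G (c (e l)) - g) * (G (c (e l')) - g)) := by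
    intro c
    rw [sq, Finset.sum_mul_sum, Finset.mul_sum]
    simp_rw [Finset.mul_sum]
  simp_rw [hexp]
  rw [Finset.sum_comm]
  have : ∀ l : κ, ∑ c : ι → A, ∑ l', (∏ j, μ (c j)) * ((G (c (e l)) - g) * (G (c (e l')) - g))
      ≤ ∑ a, μ a * G a ^ 2 := by
    intro l
    rw [Finset.sum_comm, Finset.sum_eq_single l]
    · rw [aux_pi_one μ h1 (fun a => (G a - g) * (G a - g)) (e l)]
      have : ∑ a, μ a * ((G a - g) * (G a - g)) = ∑ a, μ a * G a ^ 2 - g ^ 2 := by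
        have h2 : ∀ a, μ a * ((G a - g) * (G a - g))
            = μ a * G a ^ 2 - 2 * g * (μ a * G a) + g ^ 2 * μ a := fun a => by ring
        simp_rw [h2, Finset.sum_add_distrib, Finset.sum_sub_distrib, ← Finset.mul_sum, h1, ← hg]
        ring
      rw [this]; nlinarith [sq_nonneg g]
    · intro b _ hb
      rw [aux_pi_two' μ h1 (fun a => G a - g) (fun a => G a - g) (e l) (e b)
        (fun h => hb (he h).symm), hz]
      simp
    · simp
  calc _ ≤ ∑ l : κ, ∑ a, μ a * G a ^ 2 := Finset.sum_le_sum fun l _ => this l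
    _ = _ := by simp

/-- Cauchy-Schwarz: `E|X| ≤ c` if `E X² ≤ c²` -/
lemma aux_cs {A : Type*} [Fintype A] (μ : A → ℝ) (h0 : ∀ a, 0 ≤ μ a) (h1 : ∑ a, μ a = 1)
    (F : A → ℝ) (B : ℝ) (hB : 0 ≤ B) (h : ∑ a, μ a * F a ^ 2 ≤ B ^ 2) :
    ∑ a, μ a * |F a| ≤ B := by
  refine abs_le_of_sq_le_sq' ?_ hB |>.2
  refine le_trans ?_ h
  have hcs := Finset.sum_mul_sq_le_sq_mul_sq Finset.univ (fun a => √(μ a)) (fun a => √(μ a) * |F a|)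
  have e1 : ∀ a, √(μ a) * (√(μ a) * |F a|) = μ a * |F a| := fun a => by
    rw [← mul_assoc, Real.mul_self_sqrt (h0 a)]
  have e2 : ∀ a, (√(μ a)) ^ 2 = μ a := fun a => Real.sq_sqrt (h0 a)
  have e3 : ∀ a, (√(μ a) * |F a|) ^ 2 = μ a * F a ^ 2 := fun a => by
    rw [mul_pow, e2, sq_abs]
  simp_rw [e1, e2, e3, h1, one_mul] at hcs
  exact hcs

/-! ### Superposition codebook -/

section codebook
variable {A B J I : Type*} [Fintype A] [Fintype B] [Fintype J] [Fintype I]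

/-- law of one cloud: a center and its satellites -/
def cloud (p : A → ℝ) (P : A → B → ℝ) (a : A × (J → B)) : ℝ := p a.1 * ∏ j, P a.1 (a.2 j)

lemma cloud_nonneg {p : A → ℝ} {P : A → B → ℝ} (hp : ∀ a, 0 ≤ p a) (hP : IsStochastic P)
    (a : A × (J → B)) : 0 ≤ cloud p P a :=
  mul_nonneg (hp _) (Finset.prod_nonneg fun _ _ => hP.1 _ _)

lemma cloud_eq {p : A → ℝ} {P : A → B → ℝ} (h : A → (J → B) → ℝ) :
    ∑ a : A × (J → B), cloud p P a * h a.1 a.2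
      = ∑ w, p w * ∑ u : J → B, (∏ j, P w (u j)) * h w u := by
  rw [Fintype.sum_prod_type]
  refine Finset.sum_congr rfl fun w _ => ?_
  rw [Finset.mul_sum]
  refine Finset.sum_congr rfl fun u _ => ?_
  simp [cloud, mul_assoc]

lemma cloud_sum {p : A → ℝ} {P : A → B → ℝ} (hp : ∑ a, p a = 1) (hP : IsStochastic P) :
    ∑ a : A × (J → B), cloud p P a = 1 := by
  have := cloud_eq (J := J) (p := p) (P := P) (fun _ _ => 1)
  simp only [mul_one] at this
  rw [this]
  simp_rw [fun w => aux_pi_sum (ι := J) (P w) (hP.2 w)]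
  simpa using hp

lemma cloud_one {p : A → ℝ} {P : A → B → ℝ} (hP : IsStochastic P) (h : A → B → ℝ) (j : J) :
    ∑ a : A × (J → B), cloud p P a * h a.1 (a.2 j) = ∑ w, p w * ∑ u, P w u * h w u := by
  rw [cloud_eq (fun w u => h w (u j))]
  refine Finset.sum_congr rfl fun w _ => ?_
  rw [aux_pi_one (P w) (hP.2 w)]

lemma cloud_two {p : A → ℝ} {P : A → B → ℝ} (hP : IsStochastic P) (h : A → B → B → ℝ)
    (j j' : J) (hj : j ≠ j') :
    ∑ a : A × (J → B), cloud p P a * h a.1 (a.2 j) (a.2 j')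
      = ∑ w, p w * ∑ u, P w u * ∑ u', P w u' * h w u u' := by
  rw [cloud_eq (fun w u => h w (u j) (u j'))]
  refine Finset.sum_congr rfl fun w _ => ?_
  rw [aux_pi_two (P w) (hP.2 w) _ _ _ hj]

end codebook

section oneshot
variable {A B Y Z : Type} [Fintype A] [Fintype B] [Fintype Y] [Fintype Z]

/-- conditional output law given the cloud center -/
def outA (P : A → B → ℝ) (G : A → B → Y → ℝ) (w : A) (y : Y) : ℝ := ∑ u, P w u * G w u y

/-- output law -/
def out0 (p : A → ℝ) (P : A → B → ℝ) (G : A → B → Y → ℝ) (y : Y) : ℝ := ∑ w, p w * outA P G w y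

lemma jsum_outA (P : A → B → ℝ) (G : A → B → Y → ℝ) (w : A) (h : Y → ℝ) :
    ∑ u, P w u * ∑ y, G w u y * h y = ∑ y, outA P G w y * h y := by
  unfold outA
  simp_rw [Finset.mul_sum, Finset.sum_mul]
  rw [Finset.sum_comm]
  simp_rw [mul_assoc]

lemma jsum_out0 (p : A → ℝ) (P : A → B → ℝ) (G : A → B → Y → ℝ) (h : Y → ℝ) :
    ∑ w, p w * ∑ u, P w u * ∑ y, G w u y * h y = ∑ y, out0 p P G y * h y := by
  simp_rw [jsum_outA]
  unfold out0
  simp_rw [Finset.mul_sum, Finset.sum_mul]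
  rw [Finset.sum_comm]
  simp_rw [mul_assoc]

/-- expectation of `h` under the joint law -/
def jexp (p : A → ℝ) (P : A → B → ℝ) (G : A → B → Y → ℝ) (h : A → B → Y → ℝ) : ℝ :=
  ∑ w, p w * ∑ u, P w u * ∑ y, G w u y * h w u y

variable {J I : Type} [Fintype J] [Fintype I]

/-- upper bound on the conditional error probability for a codebook -/
def errU (G : A → B → Y → ℝ) (τ : A → B → Y → ℝ) (c : I → A × (J → B)) (i : I) (j : J) : ℝ :=
  ∑ y, G (c i).1 ((c i).2 j) y *
    ((1 - τ (c i).1 ((c i).2 j) y)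
      + ((∑ i', ∑ j', if i' = i then 0 else τ (c i').1 ((c i').2 j') y)
      + ∑ j', if j' = j then 0 else τ (c i).1 ((c i).2 j') y))

lemma errU_bound (p : A → ℝ) (P : A → B → ℝ) (G : A → B → Y → ℝ) (τ : A → B → Y → ℝ)
    (hp0 : ∀ a, 0 ≤ p a) (hp1 : ∑ a, p a = 1) (hP : IsStochastic P)
    (hG0 : ∀ w u y, 0 ≤ G w u y) (hG1 : ∀ w u, ∑ y, G w u y = 1)
    (t1 t2 : ℝ) (ht1 : 0 < t1) (ht2 : 0 < t2)
    (hτ1 : ∀ w u y, τ w u y * (t1 * out0 p P G y) ≤ G w u y)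
    (hτ2 : ∀ w u y, τ w u y * (t2 * outA P G w y) ≤ G w u y)
    (i : I) (j : J) :
    ∑ c : I → A × (J → B), (∏ l, cloud p P (c l)) * errU G τ c i j
      ≤ jexp p P G (fun w u y => 1 - τ w u y)
        + (Fintype.card I * Fintype.card J / t1 + Fintype.card J / t2) := by
  have hs := cloud_sum (J := J) hp1 hP
  have hexp : ∀ c : I → A × (J → B), (∏ l, cloud p P (c l)) * errU G τ c i j
      = (∏ l, cloud p P (c l)) * (∑ y, G (c i).1 ((c i).2 j) y * (1 - τ (c i).1 ((c i).2 j) y))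
      + ((∑ i', ∑ j', (∏ l, cloud p P (c l)) * (if i' = i then 0 else
          ∑ y, G (c i).1 ((c i).2 j) y * τ (c i').1 ((c i').2 j') y))
      + ∑ j', (∏ l, cloud p P (c l)) * (if j' = j then 0 else
          ∑ y, G (c i).1 ((c i).2 j) y * τ (c i).1 ((c i).2 j') y)) := by
    intro c
    simp_rw [← Finset.mul_sum]
    rw [← mul_add, ← mul_add]
    congr 1
    unfold errU
    simp_rw [mul_add, Finset.sum_add_distrib, Finset.mul_sum]
    congr 1
    congr 1
    · rw [Finset.sum_comm]
      refine Finset.sum_congr rfl fun i' _ => ?_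
      rw [Finset.sum_comm]
      refine Finset.sum_congr rfl fun j' _ => ?_
      split_ifs <;> simp
    · rw [Finset.sum_comm]
      refine Finset.sum_congr rfl fun j' _ => ?_
      split_ifs <;> simp
  simp_rw [hexp]
  rw [Finset.sum_add_distrib, Finset.sum_add_distrib]
  have hA : ∑ c : I → A × (J → B), (∏ l, cloud p P (c l)) *
      (∑ y, G (c i).1 ((c i).2 j) y * (1 - τ (c i).1 ((c i).2 j) y))
      = jexp p P G (fun w u y => 1 - τ w u y) := by
    rw [aux_pi_one (cloud p P) hs
      (fun a => ∑ y, G a.1 (a.2 j) y * (1 - τ a.1 (a.2 j) y)) i]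
    rw [cloud_one hP (fun w u => ∑ y, G w u y * (1 - τ w u y)) j]
    rfl
  have hout0 : ∑ w, p w * ∑ u, P w u * ∑ y, G w u y = 1 := by
    simp [hG1, hP.2, hp1]
  have hB : ∀ i' : I, ∀ j' : J, ∑ c : I → A × (J → B), (∏ l, cloud p P (c l)) *
      (if i' = i then 0 else ∑ y, G (c i).1 ((c i).2 j) y * τ (c i').1 ((c i').2 j') y)
      ≤ 1 / t1 := by
    intro i' j'
    by_cases h : i' = i
    · simp [h, ht1.le]
    simp only [h, if_false]
    rw [aux_pi_two (cloud p P) hs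
      (fun b a => ∑ y, G a.1 (a.2 j) y * τ b.1 (b.2 j') y) i' i h]
    have e1 : ∀ b : A × (J → B), ∑ a : A × (J → B), cloud p P a * ∑ y, G a.1 (a.2 j) y * τ b.1 (b.2 j') y
        = ∑ y, out0 p P G y * τ b.1 (b.2 j') y := by
      intro b
      rw [cloud_one hP (fun w u => ∑ y, G w u y * τ b.1 (b.2 j') y) j]
      exact jsum_out0 p P G _
    simp_rw [e1]
    rw [cloud_one hP (fun w u => ∑ y, out0 p P G y * τ w u y) j']
    calc _ ≤ ∑ w, p w * ∑ u, P w u * ∑ y, G w u y * (1 / t1) := by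
          refine Finset.sum_le_sum fun w _ => mul_le_mul_of_nonneg_left ?_ (hp0 w)
          refine Finset.sum_le_sum fun u _ => mul_le_mul_of_nonneg_left ?_ (hP.1 w u)
          refine Finset.sum_le_sum fun y _ => ?_
          rw [mul_one_div, le_div_iff₀ ht1]
          linarith [hτ1 w u y]
      _ = 1 / t1 := by
          simp_rw [← Finset.sum_mul, ← mul_assoc, ← Finset.sum_mul, ← mul_assoc, ← Finset.sum_mul]
          rw [hout0, one_mul]
  have hC : ∀ j' : J, ∑ c : I → A × (J → B), (∏ l, cloud p P (c l)) *
      (if j' = j then 0 else ∑ y, G (c i).1 ((c i).2 j) y * τ (c i).1 ((c i).2 j') y)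
      ≤ 1 / t2 := by
    intro j'
    by_cases h : j' = j
    · simp [h, ht2.le]
    simp only [h, if_false]
    rw [aux_pi_one (cloud p P) hs
      (fun a => ∑ y, G a.1 (a.2 j) y * τ a.1 (a.2 j') y) i]
    rw [cloud_two hP (fun w u' u => ∑ y, G w u y * τ w u' y) j' j h]
    have e1 : ∀ w u', ∑ u, P w u * ∑ y, G w u y * τ w u' y = ∑ y, outA P G w y * τ w u' y := by
      intro w u'
      exact jsum_outA P G w _
    simp_rw [e1]
    calc _ ≤ ∑ w, p w * ∑ u, P w u * ∑ y, G w u y * (1 / t2) := by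
          refine Finset.sum_le_sum fun w _ => mul_le_mul_of_nonneg_left ?_ (hp0 w)
          refine Finset.sum_le_sum fun u _ => mul_le_mul_of_nonneg_left ?_ (hP.1 w u)
          refine Finset.sum_le_sum fun y _ => ?_
          rw [mul_one_div, le_div_iff₀ ht2]
          linarith [hτ2 w u y]
      _ = 1 / t2 := by
          simp_rw [← Finset.sum_mul, ← mul_assoc, ← Finset.sum_mul, ← mul_assoc, ← Finset.sum_mul]
          rw [hout0, one_mul]
  rw [hA]
  refine add_le_add le_rfl (add_le_add ?_ ?_)
  · rw [Finset.sum_comm]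
    calc _ ≤ ∑ i' : I, ∑ j' : J, 1 / t1 := by
          refine Finset.sum_le_sum fun i' _ => ?_
          rw [Finset.sum_comm]
          exact Finset.sum_le_sum fun j' _ => hB i' j'
      _ = _ := by simp; ring
  · rw [Finset.sum_comm]
    calc _ ≤ ∑ j' : J, 1 / t2 := Finset.sum_le_sum fun j' _ => hC j'
      _ = _ := by simp; ring

/-- covering functional of a codebook -/
def secU (P : A → B → ℝ) (G : A → B → Z → ℝ) (σ : A → B → Z → ℝ) {L : Type} [Fintype L]
    (e : L → J) (c : I → A × (J → B)) (i : I) : ℝ :=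
  ∑ z, (|(Fintype.card L : ℝ)⁻¹ * ∑ l, (G (c i).1 ((c i).2 (e l)) z * σ (c i).1 ((c i).2 (e l)) z
        - ∑ u, P (c i).1 u * (G (c i).1 u z * σ (c i).1 u z))|
      + (Fintype.card L : ℝ)⁻¹ * ∑ l, G (c i).1 ((c i).2 (e l)) z
          * (1 - σ (c i).1 ((c i).2 (e l)) z))

lemma secU_bound (p : A → ℝ) (P : A → B → ℝ) (G : A → B → Z → ℝ) (σ : A → B → Z → ℝ)
    (hp0 : ∀ a, 0 ≤ p a) (hp1 : ∑ a, p a = 1) (hP : IsStochastic P)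
    (hG0 : ∀ w u y, 0 ≤ G w u y) (hG1 : ∀ w u, ∑ y, G w u y = 1)
    (s : ℝ) (hs0 : 0 ≤ s)
    (hσ0 : ∀ w u z, 0 ≤ σ w u z) (hσ1 : ∀ w u z, σ w u z ≤ 1)
    (hσ2 : ∀ w u z, G w u z * σ w u z ≤ s * outA P G w z)
    {L : Type} [Fintype L] [Nonempty L] (e : L → J) (he : Function.Injective e) (i : I) :
    ∑ c : I → A × (J → B), (∏ l, cloud p P (c l)) * secU P G σ e c i
      ≤ √(s / Fintype.card L) + jexp p P G (fun w u y => 1 - σ w u y) := by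
  have hs := cloud_sum (J := J) hp1 hP
  have hL : (0:ℝ) < Fintype.card L := by exact_mod_cast Fintype.card_pos
  simp only [secU]
  rw [aux_pi_one (cloud p P) hs (fun a =>
    ∑ z, (|(Fintype.card L : ℝ)⁻¹ * ∑ l, (G a.1 (a.2 (e l)) z * σ a.1 (a.2 (e l)) z
        - ∑ u, P a.1 u * (G a.1 u z * σ a.1 u z))|
      + (Fintype.card L : ℝ)⁻¹ * ∑ l, G a.1 (a.2 (e l)) z
          * (1 - σ a.1 (a.2 (e l)) z))) i]
  simp_rw [Finset.sum_add_distrib, mul_add]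
  rw [Finset.sum_add_distrib]
  refine add_le_add ?_ ?_
  · rw [cloud_eq (fun w u => ∑ z, |(Fintype.card L : ℝ)⁻¹ * ∑ l, (G w (u (e l)) z * σ w (u (e l)) z
        - ∑ u, P w u * (G w u z * σ w u z))|)]
    have hw : ∀ w, ∑ u : J → B, (∏ j, P w (u j)) *
        ∑ z, |(Fintype.card L : ℝ)⁻¹ * ∑ l, (G w (u (e l)) z * σ w (u (e l)) z
        - ∑ u, P w u * (G w u z * σ w u z))| ≤ √(s / Fintype.card L) := by
      intro w
      simp_rw [Finset.mul_sum (s := (Finset.univ : Finset Z))]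
      rw [Finset.sum_comm]
      have hz : ∀ z, ∑ u : J → B, (∏ j, P w (u j)) *
        |(Fintype.card L : ℝ)⁻¹ * ∑ l, (G w (u (e l)) z * σ w (u (e l)) z
        - ∑ u, P w u * (G w u z * σ w u z))| ≤ √(s / Fintype.card L) * outA P G w z := by
        intro z
        have hQ : 0 ≤ outA P G w z :=
          Finset.sum_nonneg fun u _ => mul_nonneg (hP.1 _ _) (hG0 _ _ _)
        refine aux_cs (fun u : J → B => ∏ j, P w (u j))
          (fun u => Finset.prod_nonneg fun j _ => hP.1 _ _) (aux_pi_sum (P w) (hP.2 w)) _ _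
          (mul_nonneg (Real.sqrt_nonneg _) hQ) ?_
        have hv := aux_variance (P w) (hP.1 w) (hP.2 w) (fun u => G w u z * σ w u z) e he
        have hm : ∑ u, P w u * (G w u z * σ w u z) ^ 2 ≤ s * outA P G w z ^ 2 := by
          have : s * outA P G w z ^ 2 = ∑ u, P w u * (G w u z * (s * outA P G w z)) := by
            simp_rw [← mul_assoc, ← Finset.sum_mul]
            change _ = outA P G w z * s * outA P G w z
            ring
          rw [this]
          refine Finset.sum_le_sum fun u _ => mul_le_mul_of_nonneg_left ?_ (hP.1 w u)
          rw [sq]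
          refine mul_le_mul ?_ (hσ2 w u z) (mul_nonneg (hG0 _ _ _) (hσ0 _ _ _)) (hG0 _ _ _)
          exact mul_le_of_le_one_right (hG0 _ _ _) (hσ1 _ _ _)
        simp_rw [mul_pow]
        rw [Real.sq_sqrt (by positivity)]
        have e2 : ∀ x y : ℝ, x * ((Fintype.card L : ℝ)⁻¹ ^ 2 * y)
          = (Fintype.card L : ℝ)⁻¹ ^ 2 * (x * y) := fun x y => by ring
        simp_rw [e2]
        rw [← Finset.mul_sum]
        calc _ ≤ (Fintype.card L : ℝ)⁻¹ ^ 2 * (Fintype.card L * (s * outA P G w z ^ 2)) :=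
              mul_le_mul_of_nonneg_left
                (hv.trans (mul_le_mul_of_nonneg_left hm hL.le)) (by positivity)
          _ = _ := by field_simp
      calc _ ≤ ∑ z, √(s / Fintype.card L) * outA P G w z := Finset.sum_le_sum fun z _ => hz z
        _ = √(s / Fintype.card L) := by
          rw [← Finset.mul_sum]
          have : ∑ z, outA P G w z = 1 := by
            unfold outA
            rw [Finset.sum_comm]
            simp_rw [← Finset.mul_sum, hG1, mul_one, hP.2]
          rw [this, mul_one]
    calc _ ≤ ∑ w, p w * √(s / Fintype.card L) :=
          Finset.sum_le_sum fun w _ => mul_le_mul_of_nonneg_left (hw w) (hp0 w)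
      _ = _ := by rw [← Finset.sum_mul, hp1, one_mul]
  · have e1 : ∀ a : A × (J → B), cloud p P a * ∑ z, (Fintype.card L : ℝ)⁻¹ *
        ∑ l, G a.1 (a.2 (e l)) z * (1 - σ a.1 (a.2 (e l)) z)
        = ∑ l, (Fintype.card L : ℝ)⁻¹ * (cloud p P a *
          ∑ z, G a.1 (a.2 (e l)) z * (1 - σ a.1 (a.2 (e l)) z)) := by
      intro a
      simp_rw [Finset.mul_sum]
      rw [Finset.sum_comm]
      refine Finset.sum_congr rfl fun l _ => Finset.sum_congr rfl fun z _ => ?_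
      ring
    simp_rw [e1]
    rw [Finset.sum_comm]
    simp_rw [← Finset.mul_sum]
    have e2 : ∀ l, ∑ a : A × (J → B), cloud p P a *
          ∑ z, G a.1 (a.2 (e l)) z * (1 - σ a.1 (a.2 (e l)) z)
          = jexp p P G (fun w u y => 1 - σ w u y) := by
      intro l
      rw [cloud_one hP (fun w u => ∑ z, G w u z * (1 - σ w u z)) (e l)]
      rfl
    simp_rw [e2]
    rw [Finset.sum_const, Finset.card_univ, nsmul_eq_mul, ← mul_assoc,
      inv_mul_cancel₀ hL.ne', one_mul]

end oneshot

section assemble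
variable {A B Y Z : Type} [Fintype A] [Fintype B] [Fintype Y] [Fintype Z]
variable {J I : Type} [Fintype J] [Fintype I]

/-- unique threshold decoder -/
def udec (T : A → B → Y → Prop) (c : I → A × (J → B)) (y : Y) : Option (I × J) :=
  if h : ∃! ij : I × J, T (c ij.1).1 ((c ij.1).2 ij.2) y then some h.choose else none

/-- indicator of a relation -/
def ind3 (T : A → B → Y → Prop) (w : A) (u : B) (y : Y) : ℝ := if T w u y then 1 else 0

lemma ind3_nonneg (T : A → B → Y → Prop) (w : A) (u : B) (y : Y) : 0 ≤ ind3 T w u y := by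
  unfold ind3; split_ifs <;> norm_num

lemma ind3_le_one (T : A → B → Y → Prop) (w : A) (u : B) (y : Y) : ind3 T w u y ≤ 1 := by
  unfold ind3; split_ifs <;> norm_num

lemma udec_err (T : A → B → Y → Prop) (c : I → A × (J → B)) (y : Y) (i : I) (j : J) :
    1 - (if udec T c y = some (i, j) then (1:ℝ) else 0) ≤
     ((1 - ind3 T (c i).1 ((c i).2 j) y)
      + ((∑ i', ∑ j', if i' = i then 0 else ind3 T (c i').1 ((c i').2 j') y)
      + ∑ j', if j' = j then 0 else ind3 T (c i).1 ((c i).2 j') y)) := by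
  have n1 : 0 ≤ 1 - ind3 T (c i).1 ((c i).2 j) y := by linarith [ind3_le_one T (c i).1 ((c i).2 j) y]
  have m2 : ∀ i' j', 0 ≤ if i' = i then 0 else ind3 T (c i').1 ((c i').2 j') y := by
    intro i' j'; split_ifs
    · rfl
    · exact ind3_nonneg _ _ _ _
  have m3 : ∀ j', 0 ≤ if j' = j then 0 else ind3 T (c i).1 ((c i).2 j') y := by
    intro j'; split_ifs
    · rfl
    · exact ind3_nonneg _ _ _ _
  have n2 : 0 ≤ ∑ i', ∑ j', if i' = i then 0 else ind3 T (c i').1 ((c i').2 j') y :=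
    Finset.sum_nonneg fun i' _ => Finset.sum_nonneg fun j' _ => m2 i' j'
  have n3 : 0 ≤ ∑ j', if j' = j then 0 else ind3 T (c i).1 ((c i).2 j') y :=
    Finset.sum_nonneg fun j' _ => m3 j'
  by_cases hT : T (c i).1 ((c i).2 j) y
  swap
  · have : ind3 T (c i).1 ((c i).2 j) y = 0 := by simp [ind3, hT]
    rw [this] at n1 ⊢
    split_ifs <;> linarith
  by_cases hu : ∀ ij : I × J, T (c ij.1).1 ((c ij.1).2 ij.2) y → ij = (i, j)
  · have hex : ∃! ij : I × J, T (c ij.1).1 ((c ij.1).2 ij.2) y := ⟨(i, j), hT, hu⟩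
    have : udec T c y = some (i, j) := by
      unfold udec
      rw [dif_pos hex]
      exact congrArg some (hu _ hex.choose_spec.1)
    rw [if_pos this]
    linarith
  · push Not at hu
    obtain ⟨⟨i', j'⟩, hT', hne⟩ := hu
    have hle : 1 - (if udec T c y = some (i, j) then (1:ℝ) else 0) ≤ 1 := by
      split_ifs <;> norm_num
    refine hle.trans ?_
    by_cases hi : i' = i
    · subst hi
      have hj : j' ≠ j := fun h => hne (by rw [h])
      have := Finset.single_le_sum (fun j' _ => m3 j') (Finset.mem_univ j')
      simp only [hj, if_false] at this
      have h1 : ind3 T (c i').1 ((c i').2 j') y = 1 := by simp only [ind3]; exact if_pos hT'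
      linarith
    · have h2 := Finset.single_le_sum (fun j' _ => m2 i' j') (Finset.mem_univ j')
      have h3 := Finset.single_le_sum (f := fun i' => ∑ j', if i' = i then 0 else
        ind3 T (c i').1 ((c i').2 j') y)
        (fun i' _ => Finset.sum_nonneg fun j' _ => m2 i' j') (Finset.mem_univ i')
      simp only [hi, if_false] at h2 h3
      have h1 : ind3 T (c i').1 ((c i').2 j') y = 1 := by simp only [ind3]; exact if_pos hT'
      linarith

lemma errU_nonneg (G : A → B → Y → ℝ) (T : A → B → Y → Prop)
    (hG0 : ∀ w u y, 0 ≤ G w u y) (c : I → A × (J → B)) (i : I) (j : J) :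
    0 ≤ errU G (ind3 T) c i j := by
  refine Finset.sum_nonneg fun y _ => mul_nonneg (hG0 _ _ _) ?_
  refine le_trans ?_ (udec_err T c y i j)
  split_ifs <;> norm_num

lemma secU_nonneg (P : A → B → ℝ) (G : A → B → Z → ℝ) (T : A → B → Z → Prop)
    (hG0 : ∀ w u y, 0 ≤ G w u y) {L : Type} [Fintype L]
    (e : L → J) (c : I → A × (J → B)) (i : I) :
    0 ≤ secU P G (ind3 T) e c i := by
  refine Finset.sum_nonneg fun z _ => add_nonneg (abs_nonneg _) (mul_nonneg (by positivity) ?_)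
  refine Finset.sum_nonneg fun l _ => mul_nonneg (hG0 _ _ _) ?_
  linarith [ind3_le_one T (c i).1 ((c i).2 (e l)) z]

lemma avg_le_sec (P : A → B → ℝ) (hP : IsStochastic P) (G : A → B → Z → ℝ) (T : A → B → Z → Prop)
    (hG0 : ∀ w u y, 0 ≤ G w u y) {L : Type} [Fintype L] [Nonempty L]
    (e : L → J) (c : I → A × (J → B)) (i : I) (z : Z) :
    (Fintype.card L : ℝ)⁻¹ * ∑ l, G (c i).1 ((c i).2 (e l)) z ≤ outA P G (c i).1 z +
    (|(Fintype.card L : ℝ)⁻¹ * ∑ l, (G (c i).1 ((c i).2 (e l)) z * ind3 T (c i).1 ((c i).2 (e l)) z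
        - ∑ u, P (c i).1 u * (G (c i).1 u z * ind3 T (c i).1 u z))|
      + (Fintype.card L : ℝ)⁻¹ * ∑ l, G (c i).1 ((c i).2 (e l)) z
          * (1 - ind3 T (c i).1 ((c i).2 (e l)) z)) := by
  have hL : (0:ℝ) < Fintype.card L := by exact_mod_cast Fintype.card_pos
  refine le_trans ?_ (add_le_add le_rfl (add_le_add (le_abs_self _) le_rfl))
  have hm : ∑ u, P (c i).1 u * (G (c i).1 u z * ind3 T (c i).1 u z) ≤ outA P G (c i).1 z :=
    Finset.sum_le_sum fun u _ => mul_le_mul_of_nonneg_left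
      (mul_le_of_le_one_right (hG0 _ _ _) (ind3_le_one _ _ _ _)) (hP.1 _ _)
  rw [Finset.sum_sub_distrib]
  simp_rw [mul_sub, mul_one, Finset.sum_sub_distrib]
  rw [Finset.sum_const, Finset.card_univ, nsmul_eq_mul,
    inv_mul_cancel_left₀ hL.ne']
  linarith

end assemble

lemma exists_codebook {A B Y Z : Type} [Fintype A] [Fintype B] [Fintype Y] [Fintype Z]
    {I J L K : Type} [Fintype I] [Fintype J] [Fintype L] [Fintype K]
    [Nonempty I] [Nonempty J] [Nonempty L] [Nonempty K]
    (e : K → L → J) (he : ∀ k, Function.Injective (e k))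
    (p : A → ℝ) (P : A → B → ℝ) (G : A → B → Y → ℝ) (H : A → B → Z → ℝ)
    (T : A → B → Y → Prop) (S : A → B → Z → Prop)
    (hp0 : ∀ a, 0 ≤ p a) (hp1 : ∑ a, p a = 1) (hP : IsStochastic P)
    (hG0 : ∀ w u y, 0 ≤ G w u y) (hG1 : ∀ w u, ∑ y, G w u y = 1)
    (hH0 : ∀ w u y, 0 ≤ H w u y) (hH1 : ∀ w u, ∑ y, H w u y = 1)
    (t1 t2 s : ℝ) (ht1 : 0 < t1) (ht2 : 0 < t2) (hs0 : 0 ≤ s)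
    (hT1 : ∀ w u y, T w u y → t1 * out0 p P G y ≤ G w u y)
    (hT2 : ∀ w u y, T w u y → t2 * outA P G w y ≤ G w u y)
    (hS : ∀ w u z, S w u z → H w u z ≤ s * outA P H w z) (b : ℝ)
    (hb : (jexp p P G (fun w u y => 1 - ind3 T w u y)
        + (Fintype.card I * Fintype.card J / t1
          + Fintype.card J / t2))
        + (√(s / Fintype.card L) + jexp p P H (fun w u y => 1 - ind3 S w u y)) ≤ b) :
    ∃ c : I → A × (J → B),
      (Fintype.card I : ℝ)⁻¹ * (Fintype.card J : ℝ)⁻¹ *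
        ∑ i, ∑ j, errU G (ind3 T) c i j ≤ b ∧
      (Fintype.card I : ℝ)⁻¹ * (Fintype.card K : ℝ)⁻¹ *
        ∑ i, ∑ k : K, secU P H (ind3 S) (e k) c i ≤ b := by
  have hI : (0:ℝ) < Fintype.card I := by exact_mod_cast Fintype.card_pos
  have hL : (0:ℝ) < Fintype.card L := by exact_mod_cast Fintype.card_pos
  have hK : (0:ℝ) < Fintype.card K := by exact_mod_cast Fintype.card_pos
  have hJ : (0:ℝ) < Fintype.card J := by exact_mod_cast Fintype.card_pos
  have hoA : ∀ w z, 0 ≤ outA P H w z := fun w z =>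
    Finset.sum_nonneg fun u _ => mul_nonneg (hP.1 _ _) (hH0 _ _ _)
  have hE := fun (i : I) (j : J) => errU_bound p P G (ind3 T) hp0 hp1 hP hG0 hG1 t1 t2 ht1 ht2
    (by intro w u y; unfold ind3; split_ifs with h
        · rw [one_mul]; exact hT1 w u y h
        · rw [zero_mul]; exact hG0 _ _ _)
    (by intro w u y; unfold ind3; split_ifs with h
        · rw [one_mul]; exact hT2 w u y h
        · rw [zero_mul]; exact hG0 _ _ _) i j
  have hF := fun (i : I) (k : K) => secU_bound (J := J) p P H (ind3 S) hp0 hp1 hP hH0 hH1 s hs0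
    (ind3_nonneg S) (ind3_le_one S)
    (by intro w u y; unfold ind3; split_ifs with h
        · rw [mul_one]; exact hS w u y h
        · rw [mul_zero]; exact mul_nonneg hs0 (hoA _ _)) (e k)
        (he k) i
  set bE := jexp p P G (fun w u y => 1 - ind3 T w u y)
        + (Fintype.card I * Fintype.card J / t1 + Fintype.card J / t2) with hbE
  set bF := √(s / Fintype.card L) + jexp p P H (fun w u y => 1 - ind3 S w u y) with hbF
  obtain ⟨c, hc⟩ := aux_exists_le (fun c : I → A × (J → B) => ∏ l, cloud p P (c l))
    (fun c => Finset.prod_nonneg fun l _ => cloud_nonneg hp0 hP _)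
    (aux_pi_sum _ (cloud_sum hp1 hP))
    (fun c => (Fintype.card I : ℝ)⁻¹ * (Fintype.card J : ℝ)⁻¹ *
        ∑ i, ∑ j, errU G (ind3 T) c i j + (Fintype.card I : ℝ)⁻¹ * (Fintype.card K : ℝ)⁻¹ *
        ∑ i, ∑ k : K, secU P H (ind3 S) (e k) c i) b (by
      simp_rw [mul_add]
      rw [Finset.sum_add_distrib]
      refine le_trans (add_le_add (b := bE) (d := bF) ?_ ?_) hb
      · have e1 : ∀ x y z : ℝ, x * (y * z) = y * (x * z) := fun x y z => by ring
        simp_rw [e1 (∏ l, _)]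
        rw [← Finset.mul_sum]
        simp_rw [Finset.mul_sum (s := (Finset.univ : Finset I)), Finset.mul_sum (s := (Finset.univ : Finset (J)))]
        rw [Finset.sum_comm]
        calc _ ≤ (Fintype.card I : ℝ)⁻¹ * (Fintype.card J : ℝ)⁻¹ *
              ∑ i : I, ∑ j : J, bE := by
              rw [Finset.mul_sum]
              simp_rw [Finset.mul_sum]
              refine Finset.sum_le_sum fun i _ => ?_
              rw [Finset.sum_comm]
              refine Finset.sum_le_sum fun j _ => ?_
              rw [← Finset.mul_sum]
              exact mul_le_mul_of_nonneg_left (hE i j) (by positivity)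
          _ = bE := by
            simp only [Finset.sum_const, Finset.card_univ, nsmul_eq_mul]; field_simp
      · have e1 : ∀ x y z : ℝ, x * (y * z) = y * (x * z) := fun x y z => by ring
        simp_rw [e1 (∏ l, _)]
        rw [← Finset.mul_sum]
        simp_rw [Finset.mul_sum (s := (Finset.univ : Finset I)), Finset.mul_sum (s := (Finset.univ : Finset K))]
        rw [Finset.sum_comm]
        calc _ ≤ (Fintype.card I : ℝ)⁻¹ * (Fintype.card K : ℝ)⁻¹ *
              ∑ i : I, ∑ j : K, bF := by
              rw [Finset.mul_sum]
              simp_rw [Finset.mul_sum]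
              refine Finset.sum_le_sum fun i _ => ?_
              rw [Finset.sum_comm]
              refine Finset.sum_le_sum fun j _ => ?_
              rw [← Finset.mul_sum]
              exact mul_le_mul_of_nonneg_left (hF i j) (by positivity)
          _ = bF := by
            simp only [Finset.sum_const, Finset.card_univ, nsmul_eq_mul]; field_simp)
  have n1 : 0 ≤ (Fintype.card I : ℝ)⁻¹ * (Fintype.card J : ℝ)⁻¹ *
        ∑ i, ∑ j, errU G (ind3 T) c i j := mul_nonneg (by positivity)
    (Finset.sum_nonneg fun i _ => Finset.sum_nonneg fun j _ => errU_nonneg G T hG0 c i j)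
  have n2 : 0 ≤ (Fintype.card I : ℝ)⁻¹ * (Fintype.card K : ℝ)⁻¹ *
        ∑ i, ∑ k : K, secU P H (ind3 S) (e k) c i := mul_nonneg (by positivity)
    (Finset.sum_nonneg fun i _ => Finset.sum_nonneg fun j _ => secU_nonneg P H S hH0 _ c i)
  exact ⟨c, by linarith, by linarith⟩

lemma memExt_stoch {X Y : Type*} [Fintype Y] (W : X → Y → ℝ) (hW : IsStochastic W) (n : ℕ) :
    IsStochastic (memExt W n) := by
  refine ⟨fun x y => Finset.prod_nonneg fun i _ => hW.1 _ _, fun x => ?_⟩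
  unfold memExt
  rw [aux_sum_prod (fun i a => W (x i) a)]
  simp [hW.2]

lemma card_threshold {K : Type*} [Fintype K] (v : K → ℝ) (hv : ∀ k, 0 ≤ v k) (hv1 : ∑ k, v k ≤ 1)
    (t : ℝ) (ht : 0 < t) : ∑ k, (if t < v k then (1:ℝ) else 0) ≤ 1 / t := by
  rw [le_div_iff₀ ht, Finset.sum_mul]
  refine le_trans (Finset.sum_le_sum fun k _ => ?_) hv1
  split_ifs with h
  · linarith
  · simpa using hv k

lemma assemble_code {𝒳 𝒴 𝒵 A B : Type} [Fintype 𝒳] [Fintype 𝒴] [Fintype 𝒵] [Fintype A] [Fintype B]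
    (Wc : 𝒳 → 𝒴 → ℝ) (Vc : 𝒳 → 𝒵 → ℝ) (hWc : IsStochastic Wc) (hVc : IsStochastic Vc)
    (n N0 N1 Kc : ℕ) (hN0 : 0 < N0) (hN1 : 0 < N1) (hKc : 0 < Kc)
    (p : A → ℝ) (P : A → B → ℝ) (F : A → B → (Fin n → 𝒳) → ℝ)
    (hF : ∀ w, IsStochastic (F w))
    (G : A → B → (Fin n → 𝒴) → ℝ) (H : A → B → (Fin n → 𝒵) → ℝ)
    (hG : ∀ w u y, G w u y = ∑ x, F w u x * memExt Wc n x y)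
    (hH : ∀ w u z, H w u z = ∑ x, F w u x * memExt Vc n x z)
    (T : A → B → (Fin n → 𝒴) → Prop) (S : A → B → (Fin n → 𝒵) → Prop)
    (hp0 : ∀ a, 0 ≤ p a) (hp1 : ∑ a, p a = 1) (hP : IsStochastic P)
    (t1 t2 s : ℝ) (ht1 : 0 < t1) (ht2 : 0 < t2) (hs0 : 0 ≤ s)
    (hT1 : ∀ w u y, T w u y → t1 * out0 p P G y ≤ G w u y)
    (hT2 : ∀ w u y, T w u y → t2 * outA P G w y ≤ G w u y)
    (hS : ∀ w u z, S w u z → H w u z ≤ s * outA P H w z) (b : ℝ)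
    (hb : (jexp p P G (fun w u y => 1 - ind3 T w u y)
        + ((N0 : ℝ) * ((N1 : ℝ) * Kc) / t1 + ((N1 : ℝ) * Kc) / t2))
        + (√(s / N1) + jexp p P H (fun w u y => 1 - ind3 S w u y)) ≤ b)
    (r α κ : ℝ) (hr : r ≤ Real.logb 2 ((N0 * N1 : ℕ) : ℝ) / n) (hκ : Real.logb 2 (Kc : ℝ) / n ≤ κ) :
    ∃ (f : Fin (N0 * N1) × Fin Kc → (Fin n → 𝒳) → ℝ)
          (φ : (Fin n → 𝒴) × Fin Kc → Option (Fin (N0 * N1)) → ℝ),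
          IsTACode Wc Vc r α κ (b + (Kc : ℝ)⁻¹ * (1 / (2 : ℝ) ^ (-(n : ℝ) * α))) n f φ := by
  have : Nonempty (Fin N0) := ⟨⟨0, hN0⟩⟩
  have : Nonempty (Fin N1) := ⟨⟨0, hN1⟩⟩
  have : Nonempty (Fin Kc) := ⟨⟨0, hKc⟩⟩
  have rN0 : (0:ℝ) < N0 := by exact_mod_cast hN0
  have rN1 : (0:ℝ) < N1 := by exact_mod_cast hN1
  have rKc : (0:ℝ) < Kc := by exact_mod_cast hKc
  have hWn := memExt_stoch Wc hWc n
  have hVn := memExt_stoch Vc hVc n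
  have hG0 : ∀ w u y, 0 ≤ G w u y := fun w u y => by
    rw [hG]; exact Finset.sum_nonneg fun x _ => mul_nonneg ((hF w).1 _ _) (hWn.1 _ _)
  have hH0 : ∀ w u y, 0 ≤ H w u y := fun w u y => by
    rw [hH]; exact Finset.sum_nonneg fun x _ => mul_nonneg ((hF w).1 _ _) (hVn.1 _ _)
  have hG1 : ∀ w u, ∑ y, G w u y = 1 := fun w u => by
    simp_rw [hG]; rw [Finset.sum_comm]; simp_rw [← Finset.mul_sum, hWn.2, mul_one, (hF w).2]
  have hH1 : ∀ w u, ∑ y, H w u y = 1 := fun w u => by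
    simp_rw [hH]; rw [Finset.sum_comm]; simp_rw [← Finset.mul_sum, hVn.2, mul_one, (hF w).2]
  obtain ⟨c, hcE, hcS⟩ := exists_codebook (I := Fin N0) (J := Fin N1 × Fin Kc) (L := Fin N1)
    (K := Fin Kc) (fun k l => (l, k)) (fun k a b h => (Prod.mk.inj h).1) p P G H T S
    hp0 hp1 hP hG0 hG1 hH0 hH1 t1 t2 s ht1 ht2 hs0 hT1 hT2 hS b (by simpa using hb)
  simp only [Fintype.card_fin, Fintype.card_prod, Nat.cast_mul] at hcE hcS
  have hEnn : ∀ i j, 0 ≤ errU G (ind3 T) c i j := errU_nonneg G T hG0 c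
  let eq : Fin N0 × Fin N1 ≃ Fin (N0 * N1) := finProdFinEquiv
  let D := udec T c
  let f : Fin (N0 * N1) × Fin Kc → (Fin n → 𝒳) → ℝ := fun mk =>
    F (c (eq.symm mk.1).1).1 ((c (eq.symm mk.1).1).2 ((eq.symm mk.1).2, mk.2))
  let dk : (Fin n → 𝒴) → Fin Kc → Option (Fin (N0 * N1)) := fun y k =>
    (D y).bind fun ij => if ij.2.2 = k then some (eq (ij.1, ij.2.1)) else none
  have hdk : ∀ y k i l, dk y k = some (eq (i, l)) ↔ D y = some (i, (l, k)) := by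
    intro y k i l
    simp only [dk]
    rcases hD : D y with _ | ⟨i', l', k'⟩
    · simp
    · simp only [Option.bind_some, Option.some.injEq, Prod.mk.injEq]
      split_ifs with h
      · simp [h]
      · simp [h]
  let φ : (Fin n → 𝒴) × Fin Kc → Option (Fin (N0 * N1)) → ℝ := fun yk o =>
    if o = dk yk.1 yk.2 then 1 else 0
  have hφ : IsStochastic φ := by
    refine ⟨fun b a => ?_, fun b => ?_⟩
    · simp only [φ]; split_ifs <;> norm_num
    · simp [φ]
  have hφs : ∀ y k i l, φ (y, k) (some (eq (i, l))) = if udec T c y = some (i, (l, k)) then 1 else 0 := by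
    intro y k i l
    simp only [φ]
    refine if_congr ?_ rfl rfl
    rw [eq_comm]; exact hdk y k i l
  have hpo : ∀ {O : Type} (Ch : 𝒳 → O → ℝ) (o : Fin n → O) i l k,
      pOut Ch n f o (eq (i, l)) k = ((N0 : ℝ)⁻¹ * (N1 : ℝ)⁻¹) * (Kc : ℝ)⁻¹ *
        ∑ x, F (c i).1 ((c i).2 (l, k)) x * memExt Ch n x o := by
    intro O Ch o i l k
    simp only [pOut, f, Equiv.symm_apply_apply, Fintype.card_fin]
    rw [Finset.mul_sum]
    refine Finset.sum_congr rfl fun x _ => ?_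
    push_cast
    rw [mul_inv]
    ring
  have hsumM : ∀ g : Fin (N0 * N1) → ℝ, ∑ m, g m = ∑ i, ∑ l, g (eq (i, l)) := by
    intro g
    rw [← Equiv.sum_comp eq, Fintype.sum_prod_type]
  have hf : IsStochastic f := ⟨fun b a => (hF _).1 _ _, fun b => (hF _).2 _⟩
  have hpos : (0:ℝ) < (2 : ℝ) ^ (-(n : ℝ) * α) := by positivity
  have hextra : 0 ≤ (Kc : ℝ)⁻¹ * (1 / (2 : ℝ) ^ (-(n : ℝ) * α)) := by positivity
  refine ⟨f, φ, hf, hφ, by simpa using hr, by simpa using hκ, ?_, ?_⟩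
  · -- decoding error
    refine le_trans ?_ (le_add_of_nonneg_right hextra)
    refine le_trans ?_ hcE
    have h1 : (1:ℝ) = (N0 : ℝ)⁻¹ * ((N1 : ℝ) * Kc)⁻¹ * ∑ i : Fin N0, ∑ j : Fin N1 × Fin Kc,
        ∑ y, G (c i).1 ((c i).2 j) y := by
      simp only [hG1, Finset.sum_const, Finset.card_univ, nsmul_eq_mul, mul_one, Fintype.card_fin,
        Fintype.card_prod, Nat.cast_mul]
      field_simp
    have h2 : ∑ y, ∑ m, ∑ k, pOut Wc n f y m k * φ (y, k) (some m)
        = (N0 : ℝ)⁻¹ * ((N1 : ℝ) * Kc)⁻¹ * ∑ i : Fin N0, ∑ j : Fin N1 × Fin Kc,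
        ∑ y, G (c i).1 ((c i).2 j) y * (if udec T c y = some (i, j) then 1 else 0) := by
      simp_rw [hsumM, hpo, hφs, ← hG, Fintype.sum_prod_type, Finset.mul_sum]
      rw [Finset.sum_comm]
      refine Finset.sum_congr rfl fun i _ => ?_
      rw [Finset.sum_comm]
      refine Finset.sum_congr rfl fun l _ => ?_
      rw [Finset.sum_comm]
      refine Finset.sum_congr rfl fun k _ => ?_
      refine Finset.sum_congr rfl fun y _ => ?_
      rw [mul_inv]; ring
    rw [h2]
    nth_rewrite 1 [h1]
    rw [← mul_sub, ← Finset.sum_sub_distrib]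
    refine mul_le_mul_of_nonneg_left ?_ (by positivity)
    refine Finset.sum_le_sum fun i _ => ?_
    rw [← Finset.sum_sub_distrib]
    refine Finset.sum_le_sum fun j _ => ?_
    rw [← Finset.sum_sub_distrib]
    refine Finset.sum_le_sum fun y _ => ?_
    rw [← mul_one_sub]
    exact mul_le_mul_of_nonneg_left (le_trans (le_of_eq (by congr)) (udec_err T c y i j))
      (hG0 _ _ _)
  · -- attack
    intro ψ hψ
    set t := (2 : ℝ) ^ (-(n : ℝ) * α) with ht
    let v : (Fin n → 𝒵) → Fin Kc → ℝ := fun z k =>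
      ∑ y, ψ z y * (if (D y).map (fun ij => ij.2.2) = some k then 1 else 0)
    have hv0 : ∀ z k, 0 ≤ v z k := fun z k => Finset.sum_nonneg fun y _ =>
      mul_nonneg (hψ.1 _ _) (by split_ifs <;> norm_num)
    have hv1 : ∀ z, ∑ k, v z k ≤ 1 := by
      intro z
      simp only [v]
      rw [Finset.sum_comm]
      refine le_trans (Finset.sum_le_sum fun y _ => ?_) (hψ.2 z).le
      rw [← Finset.mul_sum]
      refine mul_le_of_le_one_right (hψ.1 _ _) ?_
      have hk : ∀ o : Option (Fin Kc), ∑ k, (if o = some k then (1:ℝ) else 0) ≤ 1 := by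
        intro o
        rcases o with _ | k0
        · simp
        · simp
      exact hk _
    let χ : (Fin n → 𝒵) → Fin Kc → ℝ := fun z k => if t < v z k then 1 else 0
    have hχ0 : ∀ z k, 0 ≤ χ z k := fun z k => by simp only [χ]; split_ifs <;> norm_num
    have hχ1 : ∀ z k, χ z k ≤ 1 := fun z k => by simp only [χ]; split_ifs <;> norm_num
    have hχs : ∀ z, ∑ k, χ z k ≤ 1 / t := fun z => card_threshold (v z) (hv0 z) (hv1 z) t hpos
    have hω : ∀ z (s : Finset (Fin (N0 * N1))) k, ∑ y, ψ z y * ∑ m' ∈ s, φ (y, k) (some m') ≤ v z k := by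
      intro z m k
      refine Finset.sum_le_sum fun y _ => mul_le_mul_of_nonneg_left ?_ (hψ.1 _ _)
      split_ifs with h
      · refine le_trans (Finset.sum_le_univ_sum_of_nonneg fun m' => hφ.1 _ _) ?_
        have := hφ.2 (y, k)
        rw [Fintype.sum_option] at this
        linarith [hφ.1 (y, k) none]
      · refine (Finset.sum_eq_zero fun m' _ => ?_).le
        obtain ⟨⟨i, l⟩, rfl⟩ := eq.surjective m'
        rw [hφs, if_neg]
        intro h'
        apply h
        change Option.map _ (udec T c y) = _
        rw [h']; rfl
    have hpo0 : ∀ z m k, 0 ≤ pOut Vc n f z m k := fun z m k => by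
      obtain ⟨⟨i, l⟩, rfl⟩ := eq.surjective m
      rw [hpo, ← hH]
      have := hH0 (c i).1 ((c i).2 (l, k)) z
      positivity
    let Q : Fin N0 → (Fin n → 𝒵) → ℝ := fun i z => outA P H (c i).1 z
    have hQ1 : ∀ i, ∑ z, Q i z = 1 := by
      intro i
      simp only [Q, outA]
      rw [Finset.sum_comm]
      simp_rw [← Finset.mul_sum, hH1, mul_one, hP.2]
    have hQ0 : ∀ i z, 0 ≤ Q i z := fun i z =>
      Finset.sum_nonneg fun u _ => mul_nonneg (hP.1 _ _) (hH0 _ _ _)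
    let E : Fin N0 → Fin Kc → (Fin n → 𝒵) → ℝ := fun i k z =>
      (|(Fintype.card (Fin N1) : ℝ)⁻¹ * ∑ l, (H (c i).1 ((c i).2 (l, k)) z * ind3 S (c i).1 ((c i).2 (l, k)) z
        - ∑ u, P (c i).1 u * (H (c i).1 u z * ind3 S (c i).1 u z))|
      + (Fintype.card (Fin N1) : ℝ)⁻¹ * ∑ l, H (c i).1 ((c i).2 (l, k)) z
          * (1 - ind3 S (c i).1 ((c i).2 (l, k)) z))
    have hE0 : ∀ i k z, 0 ≤ E i k z := by
      intro i k z
      refine add_nonneg (abs_nonneg _) (mul_nonneg (by positivity) ?_)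
      refine Finset.sum_nonneg fun l _ => mul_nonneg (hH0 _ _ _) ?_
      linarith [ind3_le_one S (c i).1 ((c i).2 (l, k)) z]
    have hEs : ∀ i k, ∑ z, E i k z = secU P H (ind3 S) (fun l : Fin N1 => (l, k)) c i :=
      fun i k => rfl
    have hm : ∀ z k, ∑ m, pOut Vc n f z m k ≤ (N0 : ℝ)⁻¹ * (Kc : ℝ)⁻¹ * ∑ i, (Q i z + E i k z) := by
      intro z k
      rw [hsumM, Finset.mul_sum]
      refine Finset.sum_le_sum fun i _ => ?_
      simp_rw [hpo, ← hH]
      have := avg_le_sec P hP H S hH0 (fun l : Fin N1 => (l, k)) c i z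
      rw [← Finset.mul_sum]
      calc _ = (N0 : ℝ)⁻¹ * (Kc : ℝ)⁻¹ * ((Fintype.card (Fin N1) : ℝ)⁻¹ * ∑ l, H (c i).1 ((c i).2 (l, k)) z) := by
            rw [Fintype.card_fin]; ring
        _ ≤ _ := mul_le_mul_of_nonneg_left this (by positivity)
    calc _ ≤ ∑ z, ∑ m, ∑ k, χ z k * pOut Vc n f z m k := by
          refine Finset.sum_le_sum fun z _ => Finset.sum_le_sum fun m _ =>
            Finset.sum_le_sum fun k _ => ?_
          simp only [χ]
          split_ifs with ha hb' hb'
          · rw [one_mul]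
          · exact absurd (ha.trans_le (hω z _ k)) hb'
          · rw [one_mul]; exact hpo0 z m k
          · rw [zero_mul]
      _ = ∑ z, ∑ k, χ z k * ∑ m, pOut Vc n f z m k := by
          refine Finset.sum_congr rfl fun z _ => ?_
          rw [Finset.sum_comm]
          simp_rw [Finset.mul_sum]
      _ ≤ ∑ z, ∑ k, χ z k * ((N0 : ℝ)⁻¹ * (Kc : ℝ)⁻¹ * ∑ i, (Q i z + E i k z)) :=
          Finset.sum_le_sum fun z _ => Finset.sum_le_sum fun k _ =>
            mul_le_mul_of_nonneg_left (hm z k) (hχ0 z k)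
      _ = (N0 : ℝ)⁻¹ * (Kc : ℝ)⁻¹ * (∑ i, ∑ k, ∑ z, χ z k * E i k z)
          + (Kc : ℝ)⁻¹ * ((N0 : ℝ)⁻¹ * ∑ i, ∑ z, Q i z * ∑ k, χ z k) := by
          have a1 : ∑ z, ∑ k, χ z k * ((N0 : ℝ)⁻¹ * (Kc : ℝ)⁻¹ * ∑ i, (Q i z + E i k z))
            = ∑ i, ∑ k, ∑ z, ((N0 : ℝ)⁻¹ * (Kc : ℝ)⁻¹ * (χ z k * E i k z)
              + (Kc : ℝ)⁻¹ * ((N0 : ℝ)⁻¹ * (Q i z * χ z k))) := by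
            simp_rw [Finset.mul_sum]
            rw [Finset.sum_comm]
            conv_rhs => rw [Finset.sum_comm]
            refine Finset.sum_congr rfl fun k _ => ?_
            rw [Finset.sum_comm]
            refine Finset.sum_congr rfl fun i _ => Finset.sum_congr rfl fun z _ => ?_
            ring
          rw [a1]
          simp_rw [Finset.sum_add_distrib, ← Finset.mul_sum]
          congr 3
          refine Finset.sum_congr rfl fun i _ => ?_
          rw [Finset.sum_comm]
          simp_rw [Finset.mul_sum]
      _ ≤ b + (Kc : ℝ)⁻¹ * (1 / t) := by
          refine add_le_add (le_trans (mul_le_mul_of_nonneg_left ?_ (by positivity)) hcS)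
            (mul_le_mul_of_nonneg_left ?_ (by positivity))
          · refine Finset.sum_le_sum fun i _ => Finset.sum_le_sum fun k _ => ?_
            rw [← hEs]
            exact Finset.sum_le_sum fun z _ => mul_le_of_le_one_left (hE0 i k z) (hχ1 z k)
          · calc _ ≤ (N0 : ℝ)⁻¹ * ∑ i : Fin N0, ∑ z, Q i z * (1 / t) :=
                  mul_le_mul_of_nonneg_left (Finset.sum_le_sum fun i _ =>
                    Finset.sum_le_sum fun z _ => mul_le_mul_of_nonneg_left (hχs z) (hQ0 i z))
                    (by positivity)
              _ = 1 / t := by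
                  simp_rw [← Finset.sum_mul, hQ1]
                  simp
                  field_simp

lemma mul_div_le_of_nonneg_left' {a b : ℝ} (hb : 0 ≤ b) (ha : 0 ≤ a) : a * (b / a) ≤ b := by
  rcases ha.eq_or_lt with h | h
  · rw [← h]; simpa using hb
  · rw [mul_div_cancel₀ _ h.ne']

lemma chernoff {Ω : Type*} [Fintype Ω] (μ : Ω → ℝ) (h0 : ∀ a, 0 ≤ μ a) (h1 : ∑ a, μ a = 1)
    (g : Ω → ℝ) (hg : ∑ a, μ a * g a < 0) :
    ∃ ρ : ℝ, 0 ≤ ρ ∧ ρ < 1 ∧ ∀ n : ℕ, ∑ ω : Fin n → Ω, (∏ i, μ (ω i)) *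
      (if 0 ≤ ∑ i, g (ω i) then 1 else 0) ≤ ρ ^ n := by
  have hd : HasDerivAt (fun t : ℝ => ∑ a, μ a * Real.exp (t * g a)) (∑ a, μ a * g a) 0 := by
    refine HasDerivAt.fun_sum fun a _ => ?_
    have h2 : HasDerivAt (fun t : ℝ => t * g a) (g a) 0 := by
      simpa using (hasDerivAt_id (0:ℝ)).mul_const (g a)
    have := (h2.exp).const_mul (μ a)
    simpa using this
  have hsl := (hasDerivAt_iff_tendsto_slope.1 hd).eventually (gt_mem_nhds hg)
  have hsl2 : ∀ᶠ t in nhdsWithin (0:ℝ) (Set.Ioi 0),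
      slope (fun t : ℝ => ∑ a, μ a * Real.exp (t * g a)) 0 t < 0 :=
    hsl.filter_mono (nhdsWithin_mono _ (fun x hx => ne_of_gt hx))
  obtain ⟨t, ht, ht0⟩ := (hsl2.and self_mem_nhdsWithin).exists
  have ht0' : 0 < t := ht0
  refine ⟨∑ a, μ a * Real.exp (t * g a), Finset.sum_nonneg fun a _ =>
    mul_nonneg (h0 a) (Real.exp_pos _).le, ?_, ?_⟩
  · rw [slope_def_field] at ht
    have h3 := (div_neg_iff.1 ht)
    simp only [zero_mul, Real.exp_zero, mul_one, h1, sub_zero] at h3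
    rcases h3 with h3 | h3
    · linarith [h3.2]
    · linarith [h3.1]
  · intro n
    have e : (∑ a, μ a * Real.exp (t * g a)) ^ n
        = ∑ ω : Fin n → Ω, ∏ i, (μ (ω i) * Real.exp (t * g (ω i))) := by
      rw [aux_sum_prod (fun _ a => μ a * Real.exp (t * g a))]; simp
    rw [e]
    refine Finset.sum_le_sum fun ω _ => ?_
    rw [Finset.prod_mul_distrib]
    refine mul_le_mul_of_nonneg_left ?_ (Finset.prod_nonneg fun i _ => h0 _)
    rw [← Real.exp_sum, ← Finset.mul_sum]
    split_ifs with h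
    · exact Real.one_le_exp (by positivity)
    · exact (Real.exp_pos _).le

lemma tail {Ω : Type*} [Fintype Ω] (μ : Ω → ℝ) (h0 : ∀ a, 0 ≤ μ a) (h1 : ∑ a, μ a = 1)
    (a b : Ω → ℝ) (ha : ∀ x, 0 < μ x → 0 < a x) (hb : ∀ x, 0 < μ x → 0 < b x) (c : ℝ)
    (hc : c < ∑ x, μ x * (Real.logb 2 (a x) - Real.logb 2 (b x))) :
    ∃ ρ : ℝ, 0 ≤ ρ ∧ ρ < 1 ∧ ∀ n : ℕ, ∑ ω : Fin n → Ω, (∏ i, μ (ω i)) *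
      (if (2:ℝ) ^ ((n:ℝ) * c) * ∏ i, b (ω i) ≤ ∏ i, a (ω i) then 0 else 1) ≤ ρ ^ n := by
  obtain ⟨ρ, hρ0, hρ1, hρ⟩ := chernoff μ h0 h1
    (fun x => c - (Real.logb 2 (a x) - Real.logb 2 (b x))) (by
      simp_rw [mul_sub _ c, Finset.sum_sub_distrib, ← Finset.sum_mul, h1]; linarith)
  refine ⟨ρ, hρ0, hρ1, fun n => le_trans (Finset.sum_le_sum fun ω _ => ?_) (hρ n)⟩
  by_cases hz : ∀ i, 0 < μ (ω i)
  swap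
  · push Not at hz
    obtain ⟨i, hi⟩ := hz
    have : ∏ i, μ (ω i) = 0 := Finset.prod_eq_zero (Finset.mem_univ i) (le_antisymm hi (h0 _))
    simp [this]
  refine mul_le_mul_of_nonneg_left ?_ (Finset.prod_nonneg fun i _ => h0 _)
  have pa : 0 < ∏ i, a (ω i) := Finset.prod_pos fun i _ => ha _ (hz i)
  have pb : 0 < ∏ i, b (ω i) := Finset.prod_pos fun i _ => hb _ (hz i)
  split_ifs with h h' h'
  · norm_num
  · norm_num
  · norm_num
  · exfalso
    apply h'
    push Not at h
    have hl := Real.logb_lt_logb (by norm_num : (1:ℝ) < 2) pa h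
    rw [Real.logb_mul (by positivity) pb.ne', Real.logb_rpow (by norm_num) (by norm_num),
      Real.logb_prod _ _ (fun i _ => (ha _ (hz i)).ne'),
      Real.logb_prod _ _ (fun i _ => (hb _ (hz i)).ne')] at hl
    rw [Finset.sum_sub_distrib, Finset.sum_sub_distrib]
    simp only [Finset.sum_const, Finset.card_univ, Fintype.card_fin, nsmul_eq_mul]
    linarith

lemma gibbs {Ω : Type*} [Fintype Ω] (μ : Ω → ℝ) (h0 : ∀ a, 0 ≤ μ a) (h1 : ∑ a, μ a = 1)
    (a b : Ω → ℝ) (ha : ∀ x, 0 < μ x → 0 < a x) (hb : ∀ x, 0 < μ x → 0 < b x)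
    (hc : ∑ x, μ x * (b x / a x) ≤ 1) :
    0 ≤ ∑ x, μ x * (Real.logb 2 (a x) - Real.logb 2 (b x)) := by
  have hl2 : 0 < Real.log 2 := Real.log_pos (by norm_num)
  have key : ∀ x, μ x * ((1 - b x / a x) / Real.log 2)
      ≤ μ x * (Real.logb 2 (a x) - Real.logb 2 (b x)) := by
    intro x
    rcases (h0 x).eq_or_lt with h | h
    · simp [← h]
    · refine mul_le_mul_of_nonneg_left ?_ (h0 x)
      have pa := ha x h
      have pb := hb x h
      rw [Real.logb, Real.logb, ← sub_div]
      refine div_le_div_of_nonneg_right ?_ hl2.le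
      have := Real.log_le_sub_one_of_pos (div_pos pb pa)
      rw [Real.log_div pb.ne' pa.ne'] at this
      linarith
  refine le_trans ?_ (Finset.sum_le_sum fun x _ => key x)
  simp_rw [← mul_div_assoc]
  rw [← Finset.sum_div]
  refine div_nonneg ?_ hl2.le
  simp_rw [mul_sub, mul_one, Finset.sum_sub_distrib, h1]
  linarith

lemma disint {A B : Type*} [Fintype B] [Nonempty B] (q : A → B → ℝ) (hq : ∀ a b, 0 ≤ q a b) :
    ∃ P : A → B → ℝ, IsStochastic P ∧ ∀ a b, q a b = (∑ b, q a b) * P a b := by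
  obtain ⟨b0⟩ := ‹Nonempty B›
  refine ⟨fun a b => if ∑ b, q a b = 0 then (if b = b0 then 1 else 0) else q a b / ∑ b, q a b,
    ⟨fun a b => ?_, fun a => ?_⟩, fun a b => ?_⟩
  · beta_reduce
    split_ifs
    · norm_num
    · norm_num
    · exact div_nonneg (hq _ _) (Finset.sum_nonneg fun b _ => hq _ _)
  · beta_reduce
    split_ifs with h
    · simp
    · rw [← Finset.sum_div, div_self h]
  · beta_reduce
    split_ifs with h h'
    · rw [h, zero_mul]
      exact (Finset.sum_eq_zero_iff_of_nonneg (fun b _ => hq a b)).1 h b (Finset.mem_univ _)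
    · rw [h, zero_mul]
      exact (Finset.sum_eq_zero_iff_of_nonneg (fun b _ => hq a b)).1 h b (Finset.mem_univ _)
    · field_simp

section letters
variable {A B Y : Type} [Fintype A] [Fintype B] [Fintype Y]

/-- joint law -/
def jlaw (p : A → ℝ) (P : A → B → ℝ) (G : A → B → Y → ℝ) (ω : A × B × Y) : ℝ :=
  p ω.1 * P ω.1 ω.2.1 * G ω.1 ω.2.1 ω.2.2

lemma jexp_eq (p : A → ℝ) (P : A → B → ℝ) (G : A → B → Y → ℝ) (h : A → B → Y → ℝ) :
    jexp p P G h = ∑ ω : A × B × Y, jlaw p P G ω * h ω.1 ω.2.1 ω.2.2 := by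
  unfold jexp jlaw
  simp_rw [Fintype.sum_prod_type, Finset.mul_sum]
  refine Finset.sum_congr rfl fun w _ => Finset.sum_congr rfl fun u _ =>
    Finset.sum_congr rfl fun y _ => ?_
  ring

/-- n-fold product of a pmf -/
def pN (p : A → ℝ) (n : ℕ) (w : Fin n → A) : ℝ := ∏ i, p (w i)

/-- n-fold product of a two-input kernel -/
def gN (G : A → B → Y → ℝ) (n : ℕ) (w : Fin n → A) (u : Fin n → B) (y : Fin n → Y) : ℝ :=
  ∏ i, G (w i) (u i) (y i)

lemma outA_N (P : A → B → ℝ) (G : A → B → Y → ℝ) (n : ℕ) (w : Fin n → A) (y : Fin n → Y) :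
    outA (memExt P n) (gN G n) w y = ∏ i, outA P G (w i) (y i) := by
  unfold outA memExt gN
  simp_rw [← Finset.prod_mul_distrib]
  rw [aux_sum_prod (fun i a => P (w i) a * G (w i) a (y i))]

lemma out0_N (p : A → ℝ) (P : A → B → ℝ) (G : A → B → Y → ℝ) (n : ℕ) (y : Fin n → Y) :
    out0 (pN p n) (memExt P n) (gN G n) y = ∏ i, out0 p P G (y i) := by
  unfold out0
  simp_rw [outA_N, pN, ← Finset.prod_mul_distrib]
  rw [aux_sum_prod (fun i a => p a * outA P G a (y i))]

/-- triples of sequences as sequences of triples -/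
def seqEquiv (n : ℕ) : (Fin n → A × B × Y) ≃ (Fin n → A) × (Fin n → B) × (Fin n → Y) where
  toFun ω := (fun i => (ω i).1, fun i => (ω i).2.1, fun i => (ω i).2.2)
  invFun t := fun i => (t.1 i, t.2.1 i, t.2.2 i)
  left_inv ω := rfl
  right_inv t := rfl

lemma jexp_N (p : A → ℝ) (P : A → B → ℝ) (G : A → B → Y → ℝ) (n : ℕ)
    (h : (Fin n → A) → (Fin n → B) → (Fin n → Y) → ℝ) :
    jexp (pN p n) (memExt P n) (gN G n) h = ∑ ω : Fin n → A × B × Y, (∏ i, jlaw p P G (ω i)) *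
      h (fun i => (ω i).1) (fun i => (ω i).2.1) (fun i => (ω i).2.2) := by
  rw [jexp_eq, ← Equiv.sum_comp (seqEquiv n)]
  refine Finset.sum_congr rfl fun ω _ => ?_
  simp only [jlaw, seqEquiv, Equiv.coe_fn_mk, pN, memExt, gN, Finset.prod_mul_distrib]

variable (p : A → ℝ) (P : A → B → ℝ) (G : A → B → Y → ℝ)

lemma jlaw_nonneg (hp0 : ∀ a, 0 ≤ p a) (hP : IsStochastic P) (hG0 : ∀ w u y, 0 ≤ G w u y)
    (ω : A × B × Y) : 0 ≤ jlaw p P G ω :=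
  mul_nonneg (mul_nonneg (hp0 _) (hP.1 _ _)) (hG0 _ _ _)

lemma jlaw_sum (hp1 : ∑ a, p a = 1) (hP : IsStochastic P) (hG1 : ∀ w u, ∑ y, G w u y = 1) :
    ∑ ω, jlaw p P G ω = 1 := by
  have := jexp_eq p P G (fun _ _ _ => 1)
  simp only [mul_one] at this
  rw [← this]
  simp [jexp, hG1, hP.2, hp1]

lemma jlaw_pos (hp0 : ∀ a, 0 ≤ p a) (hP : IsStochastic P) (hG0 : ∀ w u y, 0 ≤ G w u y)
    (ω : A × B × Y) (h : 0 < jlaw p P G ω) :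
    0 < p ω.1 ∧ 0 < P ω.1 ω.2.1 ∧ 0 < G ω.1 ω.2.1 ω.2.2 ∧ 0 < outA P G ω.1 ω.2.2 ∧
      0 < out0 p P G ω.2.2 := by
  obtain ⟨w, u, y⟩ := ω
  simp only [jlaw] at h ⊢
  have h1 : 0 < p w := (hp0 w).lt_of_ne (by rintro h'; simp [← h'] at h)
  have h2 : 0 < P w u := (hP.1 w u).lt_of_ne (by rintro h'; simp [← h'] at h)
  have h3 : 0 < G w u y := (hG0 w u y).lt_of_ne (by rintro h'; simp [← h'] at h)
  have h4 : 0 < outA P G w y := lt_of_lt_of_le (mul_pos h2 h3)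
    (Finset.single_le_sum (f := fun u => P w u * G w u y)
      (fun u _ => mul_nonneg (hP.1 _ _) (hG0 _ _ _)) (Finset.mem_univ u))
  have h5 : 0 < out0 p P G y := lt_of_lt_of_le (mul_pos h1 h4)
    (Finset.single_le_sum (f := fun w => p w * outA P G w y)
      (fun w _ => mul_nonneg (hp0 _) (Finset.sum_nonneg fun u _ =>
        mul_nonneg (hP.1 _ _) (hG0 _ _ _))) (Finset.mem_univ w))
  exact ⟨h1, h2, h3, h4, h5⟩

lemma gibbs1 (hp0 : ∀ a, 0 ≤ p a) (hp1 : ∑ a, p a = 1) (hP : IsStochastic P)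
    (hG0 : ∀ w u y, 0 ≤ G w u y) (hG1 : ∀ w u, ∑ y, G w u y = 1) :
    0 ≤ jexp p P G (fun w _ y => Real.logb 2 (outA P G w y) - Real.logb 2 (out0 p P G y)) := by
  have hA0 : ∀ w y, 0 ≤ outA P G w y := fun w y =>
    Finset.sum_nonneg fun u _ => mul_nonneg (hP.1 _ _) (hG0 _ _ _)
  have h00 : ∀ y, 0 ≤ out0 p P G y := fun y =>
    Finset.sum_nonneg fun w _ => mul_nonneg (hp0 _) (hA0 _ _)
  have h01 : ∑ y, out0 p P G y = 1 := by
    have := jsum_out0 p P G (fun _ => 1)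
    simp only [mul_one] at this
    rw [← this]; simp [hG1, hP.2, hp1]
  rw [jexp_eq]
  refine gibbs (jlaw p P G) (jlaw_nonneg p P G hp0 hP hG0) (jlaw_sum p P G hp1 hP hG1)
    (fun ω => outA P G ω.1 ω.2.2) (fun ω => out0 p P G ω.2.2)
    (fun x hx => (jlaw_pos p P G hp0 hP hG0 x hx).2.2.2.1)
    (fun x hx => (jlaw_pos p P G hp0 hP hG0 x hx).2.2.2.2) ?_
  rw [← jexp_eq p P G (fun w _ y => out0 p P G y / outA P G w y)]
  unfold jexp
  simp_rw [fun w => jsum_outA P G w (fun y => out0 p P G y / outA P G w y)]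
  calc _ ≤ ∑ w, p w * ∑ y, out0 p P G y := by
        refine Finset.sum_le_sum fun w _ => mul_le_mul_of_nonneg_left ?_ (hp0 w)
        refine Finset.sum_le_sum fun y _ => ?_
        exact mul_div_le_of_nonneg_left' (h00 y) (hA0 w y)
    _ = 1 := by rw [h01]; simp [hp1]

lemma gibbs2 (hp0 : ∀ a, 0 ≤ p a) (hp1 : ∑ a, p a = 1) (hP : IsStochastic P)
    (hG0 : ∀ w u y, 0 ≤ G w u y) (hG1 : ∀ w u, ∑ y, G w u y = 1) :
    0 ≤ jexp p P G (fun w u y => Real.logb 2 (G w u y) - Real.logb 2 (outA P G w y)) := by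
  have hA0 : ∀ w y, 0 ≤ outA P G w y := fun w y =>
    Finset.sum_nonneg fun u _ => mul_nonneg (hP.1 _ _) (hG0 _ _ _)
  have hA1 : ∀ w, ∑ y, outA P G w y = 1 := fun w => by
    unfold outA
    rw [Finset.sum_comm]
    simp_rw [← Finset.mul_sum, hG1, mul_one, hP.2]
  rw [jexp_eq]
  refine gibbs (jlaw p P G) (jlaw_nonneg p P G hp0 hP hG0) (jlaw_sum p P G hp1 hP hG1)
    (fun ω => G ω.1 ω.2.1 ω.2.2) (fun ω => outA P G ω.1 ω.2.2)
    (fun x hx => (jlaw_pos p P G hp0 hP hG0 x hx).2.2.1)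
    (fun x hx => (jlaw_pos p P G hp0 hP hG0 x hx).2.2.2.1) ?_
  rw [← jexp_eq p P G (fun w u y => outA P G w y / G w u y)]
  unfold jexp
  calc _ ≤ ∑ w, p w * ∑ u, P w u * ∑ y, outA P G w y := by
        refine Finset.sum_le_sum fun w _ => mul_le_mul_of_nonneg_left ?_ (hp0 w)
        refine Finset.sum_le_sum fun u _ => mul_le_mul_of_nonneg_left ?_ (hP.1 w u)
        refine Finset.sum_le_sum fun y _ => ?_
        exact mul_div_le_of_nonneg_left' (hA0 w y) (hG0 w u y)
    _ = 1 := by simp [hA1, hP.2, hp1]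

end letters


section mutinf
variable {A B X Y : Type} [Fintype A] [Fintype B] [Fintype X] [Fintype Y]
variable (p : A → ℝ) (P : A → B → ℝ) (G : A → B → Y → ℝ)

lemma jx1 (f : Y → ℝ) : ∑ o, out0 p P G o * f o = jexp p P G (fun _ _ y => f y) :=
  (jsum_out0 p P G f).symm

lemma jx2 (hG1 : ∀ w u, ∑ y, G w u y = 1) (f : B × A → ℝ) :
    ∑ t : B × A, (p t.2 * P t.2 t.1) * f t = jexp p P G (fun w u _ => f (u, w)) := by
  unfold jexp
  simp_rw [← Finset.sum_mul, hG1, one_mul, Fintype.sum_prod_type, Finset.mul_sum]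
  rw [Finset.sum_comm]
  simp_rw [mul_assoc]

lemma jx3 (f : Y × B × A → ℝ) :
    ∑ t : Y × B × A, (p t.2.2 * P t.2.2 t.2.1 * G t.2.2 t.2.1 t.1) * f t
      = jexp p P G (fun w u y => f (y, u, w)) := by
  unfold jexp
  simp_rw [Fintype.sum_prod_type, Finset.mul_sum]
  calc _ = ∑ y, ∑ w, ∑ u, p w * P w u * G w u y * f (y, u, w) :=
        Finset.sum_congr rfl fun y _ => Finset.sum_comm
    _ = ∑ w, ∑ y, ∑ u, p w * P w u * G w u y * f (y, u, w) := Finset.sum_comm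
    _ = ∑ w, ∑ u, ∑ y, p w * P w u * G w u y * f (y, u, w) :=
        Finset.sum_congr rfl fun y _ => Finset.sum_comm
    _ = _ := by simp_rw [mul_assoc]

lemma jx4 (f : Y × A → ℝ) :
    ∑ t : Y × A, (p t.2 * outA P G t.2 t.1) * f t = jexp p P G (fun w _ y => f (y, w)) := by
  unfold jexp
  simp_rw [fun w => jsum_outA P G w (fun y => f (y, w))]
  simp_rw [Fintype.sum_prod_type, Finset.mul_sum]
  rw [Finset.sum_comm]
  simp_rw [mul_assoc]

lemma jx5 (hP : IsStochastic P) (hG1 : ∀ w u, ∑ y, G w u y = 1) (f : A → ℝ) :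
    ∑ w, p w * f w = jexp p P G (fun w _ _ => f w) := by
  unfold jexp
  simp_rw [← Finset.sum_mul, hG1, one_mul, ← Finset.sum_mul, hP.2, one_mul]

/-- the channel seen from the auxiliary variables -/
def chan (R : A → B → X → ℝ) (Ch : X → Y → ℝ) (w : A) (u : B) (y : Y) : ℝ :=
  ∑ x, R w u x * Ch x y

lemma chan_nonneg (R : A → B → X → ℝ) (Ch : X → Y → ℝ) (hR : ∀ w, IsStochastic (R w))
    (hC : IsStochastic Ch) (w : A) (u : B) (y : Y) : 0 ≤ chan R Ch w u y :=
  Finset.sum_nonneg fun x _ => mul_nonneg ((hR w).1 _ _) (hC.1 _ _)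

lemma chan_sum (R : A → B → X → ℝ) (Ch : X → Y → ℝ) (hR : ∀ w, IsStochastic (R w))
    (hC : IsStochastic Ch) (w : A) (u : B) : ∑ y, chan R Ch w u y = 1 := by
  unfold chan
  rw [Finset.sum_comm]; simp_rw [← Finset.mul_sum, hC.2, mul_one, (hR w).2]

variable (R : A → B → X → ℝ) (Ch : X → Y → ℝ) (q : A × B × X → ℝ)

lemma jexp_congr_pos (hp0 : ∀ a, 0 ≤ p a) (hP : IsStochastic P) (hG0 : ∀ w u y, 0 ≤ G w u y)
    (h h' : A → B → Y → ℝ)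
    (hh : ∀ w u y, 0 < p w → 0 < P w u → 0 < G w u y → 0 < outA P G w y → 0 < out0 p P G y →
      h w u y = h' w u y) : jexp p P G h = jexp p P G h' := by
  rw [jexp_eq, jexp_eq]
  refine Finset.sum_congr rfl fun ω _ => ?_
  rcases (jlaw_nonneg p P G hp0 hP hG0 ω).eq_or_lt with h0 | h0
  · rw [← h0]; simp
  · obtain ⟨a, b, c, d, e⟩ := jlaw_pos p P G hp0 hP hG0 ω h0
    rw [hh _ _ _ a b c d e]

lemma jexp_add (h h' : A → B → Y → ℝ) :
    jexp p P G h + jexp p P G h' = jexp p P G (fun w u y => h w u y + h' w u y) := by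
  simp only [jexp_eq, mul_add, Finset.sum_add_distrib]

lemma jexp_sub (h h' : A → B → Y → ℝ) :
    jexp p P G h - jexp p P G h' = jexp p P G (fun w u y => h w u y - h' w u y) := by
  simp only [jexp_eq, mul_sub, Finset.sum_sub_distrib]

section
lemma mq3 (hq : ∀ w u x, q (w, u, x) = p w * P w u * R w u x)
    (w : A) (u : B) (o : Y) : ∑ x, q (w, u, x) * Ch x o = p w * P w u * chan R Ch w u o := by
  simp_rw [hq, chan, Finset.mul_sum, mul_assoc]

lemma mq4 (hq : ∀ w u x, q (w, u, x) = p w * P w u * R w u x)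
    (w : A) (o : Y) : ∑ u, ∑ x, q (w, u, x) * Ch x o = p w * outA P (chan R Ch) w o := by
  simp_rw [mq3 p P R Ch q hq, outA, Finset.mul_sum, mul_assoc]

lemma mq1 (hq : ∀ w u x, q (w, u, x) = p w * P w u * R w u x)
    (o : Y) : ∑ w, ∑ u, ∑ x, q (w, u, x) * Ch x o = out0 p P (chan R Ch) o := by
  simp_rw [mq4 p P R Ch q hq, out0]

lemma mq2 (hR : ∀ w, IsStochastic (R w)) (hq : ∀ w u x, q (w, u, x) = p w * P w u * R w u x)
    (w : A) (u : B) : ∑ x, q (w, u, x) = p w * P w u := by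
  simp_rw [hq, ← Finset.mul_sum, (hR w).2, mul_one]

lemma mq5 (hR : ∀ w, IsStochastic (R w)) (hP : IsStochastic P)
    (hq : ∀ w u x, q (w, u, x) = p w * P w u * R w u x)
    (w : A) : ∑ u, ∑ x, q (w, u, x) = p w := by
  simp_rw [mq2 p P R q hR hq, ← Finset.mul_sum, hP.2, mul_one]

lemma mi1 (hR : ∀ w, IsStochastic (R w)) (hP : IsStochastic P)
    (hq : ∀ w u x, q (w, u, x) = p w * P w u * R w u x)
    (hC : IsStochastic Ch) (hp0 : ∀ a, 0 ≤ p a) :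
    miO_UW q Ch = jexp p P (chan R Ch) (fun w u y =>
      Real.logb 2 (chan R Ch w u y) - Real.logb 2 (out0 p P (chan R Ch) y)) := by
  have hG0 := chan_nonneg R Ch hR hC
  have hG1 := chan_sum R Ch hR hC
  unfold miO_UW ent
  simp_rw [mq1 p P R Ch q hq, mq3 p P R Ch q hq, mq2 p P R q hR hq]
  rw [jx1 p P (chan R Ch) (fun o => Real.logb 2 (out0 p P (chan R Ch) o)),
    jx2 p P (chan R Ch) hG1 (fun t => Real.logb 2 (p t.2 * P t.2 t.1)),
    jx3 p P (chan R Ch)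
      (fun t => Real.logb 2 (p t.2.2 * P t.2.2 t.2.1 * chan R Ch t.2.2 t.2.1 t.1))]
  rw [sub_neg_eq_add, ← neg_add, jexp_add, neg_add_eq_sub, jexp_sub]
  refine jexp_congr_pos p P _ hp0 hP hG0 _ _ fun w u y a b c d e => ?_
  rw [Real.logb_mul (mul_pos a b).ne' c.ne']
  ring

lemma mi2 (hR : ∀ w, IsStochastic (R w)) (hP : IsStochastic P)
    (hq : ∀ w u x, q (w, u, x) = p w * P w u * R w u x)
    (hC : IsStochastic Ch) (hp0 : ∀ a, 0 ≤ p a) :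
    miO_U_W q Ch = jexp p P (chan R Ch) (fun w u y =>
      Real.logb 2 (chan R Ch w u y) - Real.logb 2 (outA P (chan R Ch) w y)) := by
  have hG0 := chan_nonneg R Ch hR hC
  have hG1 := chan_sum R Ch hR hC
  unfold miO_U_W ent
  simp_rw [mq5 p P R q hR hP hq, mq4 p P R Ch q hq, mq3 p P R Ch q hq, mq2 p P R q hR hq]
  rw [jx4 p P (chan R Ch) (fun t => Real.logb 2 (p t.2 * outA P (chan R Ch) t.2 t.1)),
    jx2 p P (chan R Ch) hG1 (fun t => Real.logb 2 (p t.2 * P t.2 t.1)),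
    jx3 p P (chan R Ch)
      (fun t => Real.logb 2 (p t.2.2 * P t.2.2 t.2.1 * chan R Ch t.2.2 t.2.1 t.1)),
    jx5 p P (chan R Ch) hP hG1 (fun w => Real.logb 2 (p w))]
  rw [sub_neg_eq_add, sub_neg_eq_add, ← neg_add, jexp_add, neg_add_eq_sub, jexp_sub, jexp_add]
  refine jexp_congr_pos p P _ hp0 hP hG0 _ _ fun w u y a b c d e => ?_
  simp only []
  rw [Real.logb_mul (mul_pos a b).ne' c.ne', Real.logb_mul a.ne' b.ne', Real.logb_mul a.ne' d.ne']
  ring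

end
end mutinf

section nletter
variable {A B X Y : Type} [Fintype A] [Fintype B] [Fintype X] [Fintype Y]

lemma gN_chan (R : A → B → X → ℝ) (Ch : X → Y → ℝ) (n : ℕ) (w : Fin n → A) (u : Fin n → B)
    (y : Fin n → Y) : gN (chan R Ch) n w u y = ∑ x, gN R n w u x * memExt Ch n x y := by
  unfold gN memExt chan
  simp_rw [← Finset.prod_mul_distrib]
  rw [aux_sum_prod (fun i x => R (w i) (u i) x * Ch x (y i))]

lemma gN_stoch (R : A → B → X → ℝ) (hR : ∀ w, IsStochastic (R w)) (n : ℕ) (w : Fin n → A) :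
    IsStochastic (gN R n w) := by
  refine ⟨fun u x => Finset.prod_nonneg fun i _ => (hR _).1 _ _, fun u => ?_⟩
  unfold gN
  rw [aux_sum_prod (fun i x => R (w i) (u i) x)]
  simp [(hR _).2]

lemma pN_nonneg (p : A → ℝ) (hp0 : ∀ a, 0 ≤ p a) (n : ℕ) (w : Fin n → A) : 0 ≤ pN p n w :=
  Finset.prod_nonneg fun i _ => hp0 _

lemma pN_sum (p : A → ℝ) (hp1 : ∑ a, p a = 1) (n : ℕ) : ∑ w, pN p n w = 1 := by
  unfold pN
  rw [aux_sum_prod (fun _ a => p a)]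
  simp [hp1]

lemma tail_gen (p : A → ℝ) (P : A → B → ℝ) (G : A → B → Y → ℝ)
    (hp0 : ∀ a, 0 ≤ p a) (hp1 : ∑ a, p a = 1) (hP : IsStochastic P)
    (hG0 : ∀ w u y, 0 ≤ G w u y) (hG1 : ∀ w u, ∑ y, G w u y = 1)
    (a b : A → B → Y → ℝ)
    (ha : ∀ w u y, 0 < jlaw p P G (w, u, y) → 0 < a w u y)
    (hb : ∀ w u y, 0 < jlaw p P G (w, u, y) → 0 < b w u y) (c : ℝ)
    (hc : c < jexp p P G (fun w u y => Real.logb 2 (a w u y) - Real.logb 2 (b w u y))) :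
    ∃ ρ : ℝ, 0 ≤ ρ ∧ ρ < 1 ∧ ∀ n : ℕ, jexp (pN p n) (memExt P n) (gN G n)
      (fun w u y => if (2:ℝ) ^ ((n:ℝ) * c) * gN b n w u y ≤ gN a n w u y then 0 else 1) ≤ ρ ^ n := by
  rw [jexp_eq] at hc
  obtain ⟨ρ, h0, h1, h⟩ := tail (jlaw p P G) (jlaw_nonneg p P G hp0 hP hG0)
    (jlaw_sum p P G hp1 hP hG1) (fun ω => a ω.1 ω.2.1 ω.2.2) (fun ω => b ω.1 ω.2.1 ω.2.2)
    (fun x hx => ha _ _ _ hx) (fun x hx => hb _ _ _ hx) c hc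
  refine ⟨ρ, h0, h1, fun n => ?_⟩
  rw [jexp_N]
  exact h n

lemma jexp_mono (p : A → ℝ) (P : A → B → ℝ) (G : A → B → Y → ℝ)
    (hp0 : ∀ a, 0 ≤ p a) (hP : IsStochastic P) (hG0 : ∀ w u y, 0 ≤ G w u y)
    (h h' : A → B → Y → ℝ) (hh : ∀ w u y, h w u y ≤ h' w u y) :
    jexp p P G h ≤ jexp p P G h' := by
  rw [jexp_eq, jexp_eq]
  exact Finset.sum_le_sum fun ω _ => mul_le_mul_of_nonneg_left (hh _ _ _)
    (jlaw_nonneg p P G hp0 hP hG0 ω)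

end nletter

lemma floor_half (x : ℝ) (hx : 1 ≤ x) : 0 < ⌊x⌋₊ ∧ x / 2 ≤ (⌊x⌋₊ : ℝ) ∧ (⌊x⌋₊ : ℝ) ≤ x := by
  have h1 : 1 ≤ ⌊x⌋₊ := Nat.le_floor (by simpa using hx)
  have h2 : (1:ℝ) ≤ (⌊x⌋₊ : ℝ) := by exact_mod_cast h1
  have h3 := Nat.lt_floor_add_one x
  exact ⟨h1, by linarith, Nat.floor_le (by linarith)⟩

lemma code_mono {𝒳 𝒴 𝒵 M K : Type} [Fintype 𝒳] [Fintype 𝒴] [Fintype 𝒵] [Fintype M] [Fintype K]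
    (Wc : 𝒳 → 𝒴 → ℝ) (Vc : 𝒳 → 𝒵 → ℝ) (hVc : IsStochastic Vc) (r α κ δ α' δ' : ℝ) (n : ℕ)
    (f : M × K → (Fin n → 𝒳) → ℝ) (φ : (Fin n → 𝒴) × K → Option M → ℝ)
    (hα : α' ≤ α) (hδ : δ ≤ δ') (h : IsTACode Wc Vc r α κ δ n f φ) :
    IsTACode Wc Vc r α' κ δ' n f φ := by
  obtain ⟨h1, h2, h3, h4, h5, h6⟩ := h
  refine ⟨h1, h2, h3, h4, h5.trans hδ, fun ψ hψ => le_trans ?_ ((h6 ψ hψ).trans hδ)⟩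
  refine Finset.sum_le_sum fun z _ => Finset.sum_le_sum fun m _ => Finset.sum_le_sum fun k _ => ?_
  have hp : 0 ≤ pOut Vc n f z m k := Finset.sum_nonneg fun x _ =>
    mul_nonneg (mul_nonneg (by positivity) (h1.1 _ _)) ((memExt_stoch Vc hVc n).1 _ _)
  have hle : (2:ℝ) ^ (-(n:ℝ) * α) ≤ (2:ℝ) ^ (-(n:ℝ) * α') := by
    apply Real.rpow_le_rpow_of_exponent_le (by norm_num)
    nlinarith [(Nat.cast_nonneg n : (0:ℝ) ≤ n)]
  split_ifs with c1 c2 c2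
  · exact le_rfl
  · exact absurd (lt_of_le_of_lt hle c1) c2
  · exact hp
  · exact le_rfl

set_option maxHeartbeats 2000000 in
lemma main_delta {𝒳 𝒴 𝒵 𝒲 𝒰 : Type} [Fintype 𝒳] [Fintype 𝒴] [Fintype 𝒵] [Fintype 𝒲] [Fintype 𝒰]
    (Wc : 𝒳 → 𝒴 → ℝ) (Vc : 𝒳 → 𝒵 → ℝ) (hWc : IsStochastic Wc) (hVc : IsStochastic Vc)
    (p : 𝒲 → ℝ) (P : 𝒲 → 𝒰 → ℝ) (R : 𝒲 → 𝒰 → 𝒳 → ℝ)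
    (hp0 : ∀ a, 0 ≤ p a) (hp1 : ∑ a, p a = 1) (hP : IsStochastic P)
    (hR : ∀ w, IsStochastic (R w)) (I0 A0 B0 r α κ δ : ℝ)
    (hI0 : I0 = jexp p P (chan R Wc) (fun w u y =>
      Real.logb 2 (chan R Wc w u y) - Real.logb 2 (out0 p P (chan R Wc) y)))
    (hA0 : A0 = jexp p P (chan R Wc) (fun w u y =>
      Real.logb 2 (chan R Wc w u y) - Real.logb 2 (outA P (chan R Wc) w y)))
    (hB0 : B0 = jexp p P (chan R Vc) (fun w u y =>
      Real.logb 2 (chan R Vc w u y) - Real.logb 2 (outA P (chan R Vc) w y)))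
    (h1 : r + α ≤ I0) (h2 : α ≤ A0 - B0) (h3 : α - κ ≤ 0) (hδ : 0 < δ) (hδα : 5 * δ < α) :
    ∀ᶠ n : ℕ in Filter.atTop, ∃ (Mc Kc : ℕ) (f : Fin Mc × Fin Kc → (Fin n → 𝒳) → ℝ)
          (φ : (Fin n → 𝒴) × Fin Kc → Option (Fin Mc) → ℝ),
          IsTACode Wc Vc r (α - 6 * δ) κ δ n f φ := by
  have hG0 := chan_nonneg R Wc hR hWc
  have hG1 := chan_sum R Wc hR hWc
  have hH0 := chan_nonneg R Vc hR hVc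
  have hH1 := chan_sum R Vc hR hVc
  have hRnn : 0 ≤ I0 - A0 := by
    have := gibbs1 p P (chan R Wc) hp0 hp1 hP hG0 hG1
    rw [hI0, hA0, jexp_sub]
    refine this.trans_eq (congrArg _ ?_)
    funext w u y; ring
  have hBnn : 0 ≤ B0 := hB0 ▸ gibbs2 p P (chan R Vc) hp0 hp1 hP hH0 hH1
  obtain ⟨ρ1, a1, b1, k1⟩ := tail_gen p P (chan R Wc) hp0 hp1 hP hG0 hG1 (chan R Wc)
    (fun _ _ y => out0 p P (chan R Wc) y)
    (fun w u y h => (jlaw_pos p P _ hp0 hP hG0 _ h).2.2.1)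
    (fun w u y h => (jlaw_pos p P _ hp0 hP hG0 _ h).2.2.2.2) (I0 - δ) (by rw [← hI0]; linarith)
  obtain ⟨ρ2, a2, b2, k2⟩ := tail_gen p P (chan R Wc) hp0 hp1 hP hG0 hG1 (chan R Wc)
    (fun w _ y => outA P (chan R Wc) w y)
    (fun w u y h => (jlaw_pos p P _ hp0 hP hG0 _ h).2.2.1)
    (fun w u y h => (jlaw_pos p P _ hp0 hP hG0 _ h).2.2.2.1) (A0 - δ) (by rw [← hA0]; linarith)
  obtain ⟨ρ3, a3, b3, k3⟩ := tail_gen p P (chan R Vc) hp0 hp1 hP hH0 hH1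
    (fun w _ y => outA P (chan R Vc) w y) (chan R Vc)
    (fun w u y h => (jlaw_pos p P _ hp0 hP hH0 _ h).2.2.2.1)
    (fun w u y h => (jlaw_pos p P _ hp0 hP hH0 _ h).2.2.1) (-(B0 + δ)) (by
      have : jexp p P (chan R Vc) (fun w u y => Real.logb 2 (outA P (chan R Vc) w y)
          - Real.logb 2 (chan R Vc w u y)) = -B0 := by
        rw [eq_neg_iff_add_eq_zero, hB0, jexp_add]
        simp [jexp]
      rw [this]; linarith)
  set x : ℝ := (2:ℝ) ^ (-δ) with hx
  have hx0 : 0 ≤ x := by positivity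
  have hx1 : x < 1 := Real.rpow_lt_one_of_one_lt_of_neg (by norm_num) (by linarith)
  have hxn : ∀ n : ℕ, x ^ n = (2:ℝ) ^ (-((n:ℝ) * δ)) := fun n => by
    rw [hx, ← Real.rpow_natCast, ← Real.rpow_mul (by norm_num)]; congr 1; ring
  have lim : Filter.Tendsto (fun n : ℕ => ((ρ1 ^ n + ρ2 ^ n + (x ^ n + x ^ n))
      + (√(2 * x ^ n) + ρ3 ^ n)) + 2 * x ^ n) Filter.atTop (nhds 0) := by
    have l1 := tendsto_pow_atTop_nhds_zero_of_lt_one a1 b1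
    have l2 := tendsto_pow_atTop_nhds_zero_of_lt_one a2 b2
    have l3 := tendsto_pow_atTop_nhds_zero_of_lt_one a3 b3
    have lx := tendsto_pow_atTop_nhds_zero_of_lt_one hx0 hx1
    have l2x := lx.const_mul 2
    have ls := (Real.continuous_sqrt.tendsto _).comp l2x
    have := (((l1.add l2).add (lx.add lx)).add (ls.add l3)).add l2x
    simpa using this
  have ev1 := lim.eventually (gt_mem_nhds hδ)
  have ev2 : ∀ᶠ n : ℕ in Filter.atTop, 1 / δ ≤ (n:ℝ) :=
    tendsto_natCast_atTop_atTop.eventually_ge_atTop _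
  filter_upwards [ev1, ev2] with n e1 e2
  have hn0 : (0:ℝ) < n := lt_of_lt_of_le (by positivity) e2
  have hnδ : 1 ≤ (n:ℝ) * δ := by rwa [div_le_iff₀ hδ] at e2
  have pos : ∀ t : ℝ, (0:ℝ) < (2:ℝ) ^ t := fun t => by positivity
  have one : ∀ t : ℝ, 0 ≤ t → (1:ℝ) ≤ (2:ℝ) ^ ((n:ℝ) * t) := fun t ht =>
    Real.one_le_rpow (by norm_num) (by positivity)
  obtain ⟨n00, n01, n02⟩ := floor_half _ (one (I0 - A0) hRnn)
  obtain ⟨n10, n11, n12⟩ := floor_half _ (one (A0 - α + 2 * δ) (by linarith))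
  obtain ⟨n20, n21, n22⟩ := floor_half _ (one (α - 5 * δ) (by linarith))
  set N0 := ⌊(2:ℝ) ^ ((n:ℝ) * (I0 - A0))⌋₊
  set N1 := ⌊(2:ℝ) ^ ((n:ℝ) * (A0 - α + 2 * δ))⌋₊
  set Kc := ⌊(2:ℝ) ^ ((n:ℝ) * (α - 5 * δ))⌋₊
  have rN0 : (0:ℝ) < N0 := by exact_mod_cast n00
  have rN1 : (0:ℝ) < N1 := by exact_mod_cast n10
  have rKc : (0:ℝ) < Kc := by exact_mod_cast n20
  have hpn0 := pN_nonneg p hp0 n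
  have hPn := memExt_stoch P hP n
  have hGn0 : ∀ w u y, 0 ≤ gN (chan R Wc) n w u y := fun w u y =>
    Finset.prod_nonneg fun i _ => hG0 _ _ _
  have hHn0 : ∀ w u y, 0 ≤ gN (chan R Vc) n w u y := fun w u y =>
    Finset.prod_nonneg fun i _ => hH0 _ _ _
  let T : (Fin n → 𝒲) → (Fin n → 𝒰) → (Fin n → 𝒴) → Prop := fun w u y =>
    (2:ℝ) ^ ((n:ℝ) * (I0 - δ)) * gN (fun _ _ y => out0 p P (chan R Wc) y) n w u y
      ≤ gN (chan R Wc) n w u y ∧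
    (2:ℝ) ^ ((n:ℝ) * (A0 - δ)) * gN (fun w _ y => outA P (chan R Wc) w y) n w u y
      ≤ gN (chan R Wc) n w u y
  let S : (Fin n → 𝒲) → (Fin n → 𝒰) → (Fin n → 𝒵) → Prop := fun w u y =>
    (2:ℝ) ^ ((n:ℝ) * (-(B0 + δ))) * gN (chan R Vc) n w u y
      ≤ gN (fun w _ y => outA P (chan R Vc) w y) n w u y
  have bT : jexp (pN p n) (memExt P n) (gN (chan R Wc) n) (fun w u y => 1 - ind3 T w u y)
      ≤ ρ1 ^ n + ρ2 ^ n := by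
    refine le_trans ?_ (add_le_add (k1 n) (k2 n))
    rw [jexp_add]
    refine jexp_mono _ _ _ hpn0 hPn hGn0 _ _ fun w u y => ?_
    unfold ind3
    by_cases c1 : (2:ℝ) ^ ((n:ℝ) * (I0 - δ)) * gN (fun _ _ y => out0 p P (chan R Wc) y) n w u y
      ≤ gN (chan R Wc) n w u y
    · by_cases c2 : (2:ℝ) ^ ((n:ℝ) * (A0 - δ)) * gN (fun w _ y => outA P (chan R Wc) w y) n w u y
        ≤ gN (chan R Wc) n w u y
      · have : T w u y := ⟨c1, c2⟩
        rw [if_pos c1, if_pos c2, if_pos this]; norm_num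
      · rw [if_pos c1, if_neg c2]; split_ifs <;> norm_num
    · rw [if_neg c1]; split_ifs <;> norm_num
  have bS : jexp (pN p n) (memExt P n) (gN (chan R Vc) n) (fun w u y => 1 - ind3 S w u y)
      ≤ ρ3 ^ n := by
    refine le_trans ?_ (k3 n)
    refine jexp_mono _ _ _ hpn0 hPn hHn0 _ _ fun w u y => ?_
    unfold ind3
    by_cases c1 : S w u y
    · rw [if_pos c1]
      have c1' := c1
      simp only [S] at c1'
      rw [if_pos c1']; norm_num
    · rw [if_neg c1]
      have c1' := c1
      simp only [S] at c1'
      rw [if_neg c1']; norm_num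
  have bound1 : (N0:ℝ) * ((N1:ℝ) * Kc) / (2:ℝ) ^ ((n:ℝ) * (I0 - δ)) ≤ x ^ n := by
    rw [div_le_iff₀ (pos _)]
    calc (N0:ℝ) * ((N1:ℝ) * Kc) ≤ (2:ℝ) ^ ((n:ℝ) * (I0 - A0)) *
          ((2:ℝ) ^ ((n:ℝ) * (A0 - α + 2 * δ)) * (2:ℝ) ^ ((n:ℝ) * (α - 5 * δ))) := by gcongr
      _ ≤ _ := by
        rw [hxn, ← Real.rpow_add (by norm_num), ← Real.rpow_add (by norm_num),
          ← Real.rpow_add (by norm_num)]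
        apply Real.rpow_le_rpow_of_exponent_le (by norm_num)
        nlinarith
  have bound2 : ((N1:ℝ) * Kc) / (2:ℝ) ^ ((n:ℝ) * (A0 - δ)) ≤ x ^ n := by
    rw [div_le_iff₀ (pos _)]
    calc ((N1:ℝ) * Kc) ≤
          ((2:ℝ) ^ ((n:ℝ) * (A0 - α + 2 * δ)) * (2:ℝ) ^ ((n:ℝ) * (α - 5 * δ))) := by gcongr
      _ ≤ _ := by
        rw [hxn, ← Real.rpow_add (by norm_num), ← Real.rpow_add (by norm_num)]
        apply Real.rpow_le_rpow_of_exponent_le (by norm_num)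
        nlinarith
  have bound3 : √((2:ℝ) ^ ((n:ℝ) * (B0 + δ)) / N1) ≤ √(2 * x ^ n) := by
    apply Real.sqrt_le_sqrt
    rw [div_le_iff₀ rN1]
    calc (2:ℝ) ^ ((n:ℝ) * (B0 + δ)) ≤ x ^ n * (2:ℝ) ^ ((n:ℝ) * (A0 - α + 2 * δ)) := by
          rw [hxn, ← Real.rpow_add (by norm_num)]
          apply Real.rpow_le_rpow_of_exponent_le (by norm_num)
          nlinarith
      _ = 2 * x ^ n * ((2:ℝ) ^ ((n:ℝ) * (A0 - α + 2 * δ)) / 2) := by ring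
      _ ≤ _ := by gcongr
  have bound4 : (Kc:ℝ)⁻¹ * (1 / (2:ℝ) ^ (-(n:ℝ) * (α - 6 * δ))) ≤ 2 * x ^ n := by
    rw [inv_mul_le_iff₀ rKc, div_le_iff₀ (pos _)]
    calc (1:ℝ) = (2:ℝ) ^ ((n:ℝ) * (α - 5 * δ)) * x ^ n * (2:ℝ) ^ (-(n:ℝ) * (α - 6 * δ)) := by
          rw [hxn, ← Real.rpow_add (by norm_num), ← Real.rpow_add (by norm_num)]
          rw [← Real.rpow_zero 2]; congr 1; ring
      _ = (2:ℝ) ^ ((n:ℝ) * (α - 5 * δ)) / 2 * (2 * x ^ n) * (2:ℝ) ^ (-(n:ℝ) * (α - 6 * δ)) := by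
          ring
      _ ≤ _ := by gcongr
  obtain ⟨f, φ, hc⟩ := assemble_code Wc Vc hWc hVc n N0 N1 Kc n00 n10 n20 (pN p n) (memExt P n)
    (gN R n) (gN_stoch R hR n) (gN (chan R Wc) n) (gN (chan R Vc) n) (gN_chan R Wc n)
    (gN_chan R Vc n) T S hpn0 (pN_sum p hp1 n) hPn ((2:ℝ) ^ ((n:ℝ) * (I0 - δ)))
    ((2:ℝ) ^ ((n:ℝ) * (A0 - δ))) ((2:ℝ) ^ ((n:ℝ) * (B0 + δ))) (pos _) (pos _) (pos _).le
    (fun w u y h => by rw [out0_N]; exact h.1)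
    (fun w u y h => by rw [outA_N]; exact h.2)
    (fun w u y h => by
      rw [outA_N]
      have h' : (2:ℝ) ^ ((n:ℝ) * (-(B0 + δ))) * gN (chan R Vc) n w u y
        ≤ ∏ i, outA P (chan R Vc) (w i) (y i) := h
      have h'' := mul_le_mul_of_nonneg_left h' (pos ((n:ℝ) * (B0 + δ))).le
      rw [← mul_assoc, ← Real.rpow_add (by norm_num)] at h''
      have e : (n:ℝ) * (B0 + δ) + (n:ℝ) * (-(B0 + δ)) = 0 := by ring
      rw [e, Real.rpow_zero, one_mul] at h''
      exact h'')
    _ (le_rfl) r (α - 6 * δ) κ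
    (by
      rw [le_div_iff₀ hn0]
      have : (2:ℝ) ^ (n * (I0 - α + 2 * δ) - 2) ≤ ((N0 * N1 : ℕ) : ℝ) := by
        push_cast
        calc (2:ℝ) ^ (n * (I0 - α + 2 * δ) - 2) = (2:ℝ) ^ ((n:ℝ) * (I0 - A0)) / 2 *
              ((2:ℝ) ^ ((n:ℝ) * (A0 - α + 2 * δ)) / 2) := by
              rw [Real.rpow_sub (by norm_num), div_mul_div_comm, ← Real.rpow_add (by norm_num)]
              congr 1
              · congr 1; ring
              · norm_num
          _ ≤ _ := by gcongr
      have h' := Real.logb_le_logb_of_le (by norm_num : (1:ℝ) < 2) (pos _) this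
      rw [Real.logb_rpow (by norm_num) (by norm_num)] at h'
      refine le_trans ?_ h'
      nlinarith)
    (by
      rw [div_le_iff₀ hn0]
      have h' := Real.logb_le_logb_of_le (by norm_num : (1:ℝ) < 2) rKc n22
      rw [Real.logb_rpow (by norm_num) (by norm_num)] at h'
      refine le_trans h' ?_
      nlinarith)
  refine ⟨N0 * N1, Kc, f, φ, code_mono Wc Vc hVc _ _ _ _ _ _ _ _ _ le_rfl ?_ hc⟩
  linarith

lemma trivial_code {𝒳 𝒴 𝒵 : Type} [Fintype 𝒳] [Fintype 𝒴] [Fintype 𝒵] [Nonempty 𝒳]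
    (Wc : 𝒳 → 𝒴 → ℝ) (Vc : 𝒳 → 𝒵 → ℝ) (r α κ : ℝ) (hκ : 0 < κ) (n : ℕ) (hn : 0 < n) :
    ∃ (Mc Kc : ℕ) (f : Fin Mc × Fin Kc → (Fin n → 𝒳) → ℝ)
          (φ : (Fin n → 𝒴) × Fin Kc → Option (Fin Mc) → ℝ),
          IsTACode Wc Vc r α κ 1 n f φ := by
  obtain ⟨x0⟩ := ‹Nonempty 𝒳›
  have hn0 : (0:ℝ) < n := by exact_mod_cast hn
  refine ⟨⌈(2:ℝ) ^ ((n:ℝ) * r)⌉₊, 1, fun _ x => if x = fun _ => x0 then 1 else 0,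
    fun _ o => if o = none then 1 else 0, ⟨fun _ x => ?_, fun _ => ?_⟩, ⟨fun _ o => ?_, fun _ => ?_⟩,
    ?_, ?_, ?_, fun ψ hψ => ?_⟩
  · beta_reduce; split_ifs <;> norm_num
  · simp
  · beta_reduce; split_ifs <;> norm_num
  · simp
  · rw [Fintype.card_fin, le_div_iff₀ hn0]
    have := Real.logb_le_logb_of_le (by norm_num : (1:ℝ) < 2) (by positivity)
      (Nat.le_ceil ((2:ℝ) ^ ((n:ℝ) * r)))
    rw [Real.logb_rpow (by norm_num) (by norm_num)] at this
    linarith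
  · simp [hκ.le]
  · simp
  · have hpos : ¬ ((2:ℝ) ^ (-(n:ℝ) * α) < 0) := not_lt.2 (by positivity)
    simp only [reduceCtorEq, if_false, Finset.sum_const_zero, mul_zero, hpos]
    norm_num

lemma diag (Q : ℝ → ℕ → Prop) (hm : ∀ δ δ' n, δ ≤ δ' → Q δ n → Q δ' n)
    (h1 : ∀ n, 0 < n → Q 1 n) (δ0 : ℝ) (h0 : 0 < δ0)
    (h : ∀ δ, 0 < δ → δ < δ0 → ∀ᶠ n in Filter.atTop, Q δ n) :
    ∃ ds : ℕ → ℝ, (∀ n, 0 < n → Q (ds n) n) ∧ Filter.Tendsto ds Filter.atTop (nhds 0) := by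
  let S : ℕ → Set ℝ := fun n => {δ | 0 < δ ∧ Q δ n}
  have hbdd : ∀ n, BddBelow (S n) := fun n => ⟨0, fun x hx => hx.1.le⟩
  have hnn : ∀ n, 0 ≤ sInf (S n) := fun n => Real.sInf_nonneg fun x hx => hx.1.le
  refine ⟨fun n => sInf (S n) + 1 / ((n:ℝ) + 1), fun n hn => ?_, ?_⟩
  · have hne : (S n).Nonempty := ⟨1, one_pos, h1 n hn⟩
    obtain ⟨δ, hδ, hlt⟩ := exists_lt_of_csInf_lt hne
      (lt_add_of_pos_right (sInf (S n)) (by positivity : (0:ℝ) < 1 / ((n:ℝ) + 1)))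
    exact hm _ _ _ hlt.le hδ.2
  · have l1 : Filter.Tendsto (fun n => sInf (S n)) Filter.atTop (nhds 0) := by
      rw [tendsto_order]
      refine ⟨fun a ha => Filter.Eventually.of_forall fun n => lt_of_lt_of_le ha (hnn n),
        fun a ha => ?_⟩
      have hpos : 0 < min a δ0 / 2 := by
        have := lt_min ha h0
        linarith
      have hl1 : min a δ0 / 2 < δ0 := by
        have := min_le_right a δ0
        linarith
      have hl2 : min a δ0 / 2 < a := by
        have := min_le_left a δ0
        linarith
      filter_upwards [h _ hpos hl1] with n hn
      exact lt_of_le_of_lt (csInf_le (hbdd n) ⟨hpos, hn⟩) hl2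
    simpa using l1.add tendsto_one_div_add_atTop_nhds_zero_nat

/-- Theorem 2 / `thm:lai`-type inner bound: if there exist finitely
supported random variables `W, U, X` with `(U,W) → X → (Y,Z)` a Markov chain (the
joint law of `(W,U,X)` is `q`, and `Y`, `Z` are obtained from `X` through the
channels `Wc = p_{Y|X}` and `Vc = p_{Z|X}`) such that `r + α ≤ I(Y;U,W)`,
`α ≤ I(Y;U|W) − I(Z;U|W)` and `α − κ ≤ 0`, then `(r,α,κ) ∈ C_TA(p_{Y|X},p_{Z|X})`. -/
theorem statement0 {𝒳 𝒴 𝒵 : Type} [Fintype 𝒳] [Fintype 𝒴] [Fintype 𝒵]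
    (Wc : 𝒳 → 𝒴 → ℝ) (Vc : 𝒳 → 𝒵 → ℝ)
    (hWc : IsStochastic Wc) (hVc : IsStochastic Vc)
    (r α κ : ℝ) (hr : 0 < r) (hα : 0 < α) (hκ : 0 < κ)
    {𝒲 𝒰 : Type} [Fintype 𝒲] [Fintype 𝒰]
    (q : 𝒲 × 𝒰 × 𝒳 → ℝ) (hq0 : ∀ t, 0 ≤ q t) (hq1 : ∑ t, q t = 1)
    (h1 : r + α ≤ miO_UW q Wc)
    (h2 : α ≤ miO_U_W q Wc - miO_U_W q Vc)
    (h3 : α - κ ≤ 0) :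
    (r, α, κ) ∈ CTA Wc Vc := by

  have hne : Nonempty (𝒲 × 𝒰 × 𝒳) := by
    by_contra hcon
    rw [not_nonempty_iff] at hcon
    simp at hq1
  obtain ⟨w0, u0, x0⟩ := hne
  have : Nonempty 𝒳 := ⟨x0⟩
  have : Nonempty 𝒰 := ⟨u0⟩
  obtain ⟨R, hR, hRe⟩ := disint (fun (t : 𝒲 × 𝒰) (x : 𝒳) => q (t.1, t.2, x)) (fun _ _ => hq0 _)
  obtain ⟨P, hP, hPe⟩ := disint (fun (w : 𝒲) (u : 𝒰) => ∑ x, q (w, u, x))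
    (fun _ _ => Finset.sum_nonneg fun _ _ => hq0 _)
  have hR' : ∀ w, IsStochastic (fun u x => R (w, u) x) := fun w =>
    ⟨fun u x => hR.1 _ _, fun u => hR.2 _⟩
  have hp0 : ∀ w, 0 ≤ ∑ u, ∑ x, q (w, u, x) := fun w =>
    Finset.sum_nonneg fun _ _ => Finset.sum_nonneg fun _ _ => hq0 _
  have hp1 : ∑ w, ∑ u, ∑ x, q (w, u, x) = 1 := by
    rw [← hq1]; simp_rw [Fintype.sum_prod_type]
  have hq : ∀ w u x, q (w, u, x) = (∑ u, ∑ x, q (w, u, x)) * P w u * R (w, u) x := by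
    intro w u x
    rw [← hPe w u]
    exact hRe (w, u) x
  have I1 := mi1 (fun w => ∑ u, ∑ x, q (w, u, x)) P (fun w u x => R (w, u) x) Wc q hR' hP hq hWc hp0
  have I2 := mi2 (fun w => ∑ u, ∑ x, q (w, u, x)) P (fun w u x => R (w, u) x) Wc q hR' hP hq hWc hp0
  have I3 := mi2 (fun w => ∑ u, ∑ x, q (w, u, x)) P (fun w u x => R (w, u) x) Vc q hR' hP hq hVc hp0
  obtain ⟨ds, hd, hd0⟩ := diag (fun δ n => ∃ (Mc Kc : ℕ) (f : Fin Mc × Fin Kc → (Fin n → 𝒳) → ℝ)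
          (φ : (Fin n → 𝒴) × Fin Kc → Option (Fin Mc) → ℝ),
          IsTACode Wc Vc r (α - 6 * δ) κ δ n f φ)
    (by
      rintro δ δ' n hle ⟨Mc, Kc, f, φ, hc⟩
      exact ⟨Mc, Kc, f, φ, code_mono Wc Vc hVc _ _ _ _ _ _ _ _ _ (by linarith) hle hc⟩)
    (fun n hn => trivial_code Wc Vc r (α - 6 * 1) κ hκ n hn) (α / 5) (by linarith)
    (fun δ hδ hlt => main_delta Wc Vc hWc hVc _ P _ hp0 hp1 hP hR' _ _ _ r α κ δ I1 I2 I3 h1 h2 h3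
      hδ (by linarith))
  refine ⟨hr, fun _ => r, fun n => α - 6 * ds n, fun _ => κ, ds, fun i hi => hd i hi, ?_⟩
  refine tendsto_const_nhds.prodMk_nhds (Filter.Tendsto.prodMk_nhds ?_
    (tendsto_const_nhds.prodMk_nhds hd0))
  simpa using (tendsto_const_nhds (x := α)).sub (hd0.const_mul 6)
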